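/- arXiv:1303.3122 — 7 statements merged into one kernel-verified Lean document; each statement's English description precedes it below -/
import Mathlib

section
/- Let α ∈ (-1, 1) and define h_α(t) = (1 + 1/t)^α for t > 0. Then for every integer m ≥ 1 and every t > 0, the m-th derivative of h_α satisfies h_α^(m)(t) = ((-1)^m / (t^m (1+t)^m)) · (1 + 1/t)^α · Σ_{k=0}^{m-1} a_{α,m,k} t^k, where a_{α,m,k} = k! · C(m,k) · C(m-1,k) · Π_{ℓ=0}^{m-k-1} (α + ℓ), and C(n,k) denotes the binomial coefficient. -/
open Real Finset

/-! The function `h(t) = (1 + 1/t)^α` has the rational logarithmic derivative `α / (-t(1+t))`.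
Whenever `h' = (p/q) h` with polynomials `p` and `q`, differentiating `h⁽ᵐ⁾ = (N_m / q^m) h` gives
`N_{m+1} = (p - m q') N_m + q N_m'`. For `p = α` and `q = -X(1+X)` this is a two-term recurrence on
coefficients. Its solution is `r_k(m, m-1) · α(α+1)⋯(α+m-k-1)`, where the rook numbers
`r_k(a, b) = k! C(a,k) C(b,k)` enter through the effect of adding a row and a column to a board. -/

section RookNumber

/-- The number of ways to place `k` non-attacking rooks on an `a × b` board: choose the rows, the
columns, and a bijection between them. -/
def rookNumber (a b k : ℕ) : ℕ := k.factorial * a.choose k * b.choose k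

theorem rookNumber_zero (a b : ℕ) : rookNumber a b 0 = 1 := by
  simp [rookNumber]

theorem rookNumber_eq_descFactorial_mul_choose (a b k : ℕ) :
    rookNumber a b k = a.descFactorial k * b.choose k := by
  rw [rookNumber, Nat.descFactorial_eq_factorial_mul_choose]

theorem rookNumber_eq_zero_of_lt {a b k : ℕ} (h : b < k) : rookNumber a b k = 0 := by
  rw [rookNumber, Nat.choose_eq_zero_of_lt h, mul_zero]

/- The new row and column have `a + b + 1` cells. Given `k` rooks on the old board, `a + b + 1 - 2k`
of these cells are free for one further rook. Placements with two rooks in the new cells number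
`(a - k + 1) (b - k + 1) r_{k-1}(a, b) = k r_k(a, b)`. -/
theorem rookNumber_succ_succ_succ {R : Type*} [CommRing R] (a b k : ℕ) :
    (rookNumber (a + 1) (b + 1) (k + 1) : R) =
      rookNumber a b (k + 1) + (a + b + 1 - k) * rookNumber a b k := by
  have descFactorial_succ :
      (a.descFactorial (k + 1) : R) = (a - k) * a.descFactorial k := by
    rcases le_or_gt k a with hk | hk
    · rw [Nat.descFactorial_succ, Nat.cast_mul, Nat.cast_sub hk]
    · simp [Nat.descFactorial_of_lt hk]
  have choose_succ_right : (b.choose (k + 1) : R) * (k + 1) = b.choose k * (b - k) := by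
    rcases le_or_gt k b with hk | hk
    · rw [← Nat.cast_sub hk]
      exact_mod_cast congrArg (Nat.cast (R := R)) (Nat.choose_succ_right_eq b k)
    · simp [Nat.choose_eq_zero_of_lt hk, Nat.choose_eq_zero_of_lt (hk.trans k.lt_succ_self)]
  simp only [rookNumber_eq_descFactorial_mul_choose, Nat.succ_descFactorial_succ,
    Nat.choose_succ_succ', Nat.cast_mul, Nat.cast_add, Nat.cast_one, descFactorial_succ]
  linear_combination (a.descFactorial k : R) * choose_succ_right

end RookNumber

open Polynomial Topology

section LogDerivNumerator

/-- The polynomials `N_m` for which a solution of `h' = (p / q) h` has `m`-th derivative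
`(N_m / q ^ m) h`. -/
noncomputable def logDerivNumerator {R : Type*} [CommRing R] (p q : R[X]) : ℕ → R[X]
  | 0 => 1
  | m + 1 => (p - m * derivative q) * logDerivNumerator p q m +
      q * derivative (logDerivNumerator p q m)

variable {𝕜 : Type*} [NontriviallyNormedField 𝕜] {p q : 𝕜[X]} {h : 𝕜 → 𝕜}

theorem hasDerivAt_logDerivNumerator_div_mul {t : 𝕜} (hq : q.eval t ≠ 0)
    (hh : HasDerivAt h (p.eval t / q.eval t * h t) t) (m : ℕ) :
    HasDerivAt (fun s => (logDerivNumerator p q m).eval s / q.eval s ^ m * h s)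
      ((logDerivNumerator p q (m + 1)).eval t / q.eval t ^ (m + 1) * h t) t := by
  have quotient := ((logDerivNumerator p q m).hasDerivAt t).fun_div ((q.hasDerivAt t).fun_pow m)
    (pow_ne_zero m hq)
  refine (quotient.fun_mul hh).congr_deriv ?_
  simp only [logDerivNumerator, eval_add, eval_sub, eval_mul, eval_natCast]
  cases m with
  | zero =>
    simp only [pow_zero, pow_one, zero_add, Nat.cast_zero]
    field_simp
    ring
  | succ m =>
    rw [Nat.add_sub_cancel]
    field_simp
    ring

theorem iteratedDeriv_eq_logDerivNumerator_div_mul {U : Set 𝕜} (hU : IsOpen U)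
    (hq : ∀ s ∈ U, q.eval s ≠ 0) (hh : ∀ s ∈ U, HasDerivAt h (p.eval s / q.eval s * h s) s)
    (m : ℕ) {t : 𝕜} (ht : t ∈ U) :
    iteratedDeriv m h t = (logDerivNumerator p q m).eval t / q.eval t ^ m * h t := by
  induction m generalizing t with
  | zero => simp [logDerivNumerator]
  | succ m ih =>
    have eventuallyEq : iteratedDeriv m h =ᶠ[𝓝 t]
        fun s => (logDerivNumerator p q m).eval s / q.eval s ^ m * h s := by
      filter_upwards [hU.mem_nhds ht] with s hs using ih hs
    rw [iteratedDeriv_succ, eventuallyEq.deriv_eq,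
      (hasDerivAt_logDerivNumerator_div_mul (hq t ht) (hh t ht) m).deriv]

end LogDerivNumerator

section HAlphaNumerator

variable {R : Type*} [CommRing R]

/-- The numerators of `h⁽ᵐ⁾ / h` over the denominators `(-t(1 + t)) ^ m`, for
`h(t) = (1 + 1/t) ^ α`. With the sign in the denominator, the coefficients are natural multiples of
the rising factorials of `α`. -/
noncomputable def hAlphaNumerator (α : R) : ℕ → R[X] := logDerivNumerator (C α) (-(X * (1 + X)))

theorem hAlphaNumerator_succ (α : R) (m : ℕ) :
    hAlphaNumerator α (m + 1) =
      C (α + m) * hAlphaNumerator α m + C (2 * m : R) * (X * hAlphaNumerator α m) -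
        (X * derivative (hAlphaNumerator α m) +
          X * (X * derivative (hAlphaNumerator α m))) := by
  simp only [hAlphaNumerator, logDerivNumerator, derivative_neg, derivative_mul, derivative_X,
    derivative_one, map_add, map_mul, map_natCast, map_ofNat]
  ring

theorem coeff_zero_hAlphaNumerator_succ (α : R) (m : ℕ) :
    (hAlphaNumerator α (m + 1)).coeff 0 = (α + m) * (hAlphaNumerator α m).coeff 0 := by
  simp only [hAlphaNumerator_succ, coeff_sub, coeff_add, coeff_C_mul, coeff_X_mul_zero, mul_zero,
    add_zero, sub_zero]

theorem coeff_X_mul_derivative (f : R[X]) (k : ℕ) :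
    (X * derivative f).coeff k = k * f.coeff k := by
  cases k with
  | zero => simp
  | succ k => rw [coeff_X_mul, coeff_derivative, mul_comm, Nat.cast_succ]

theorem coeff_succ_hAlphaNumerator_succ (α : R) (m k : ℕ) :
    (hAlphaNumerator α (m + 1)).coeff (k + 1) =
      (α + m - (k + 1)) * (hAlphaNumerator α m).coeff (k + 1) +
        (2 * m - k) * (hAlphaNumerator α m).coeff k := by
  simp only [hAlphaNumerator_succ, coeff_sub, coeff_add, coeff_C_mul, coeff_X_mul,
    coeff_derivative, coeff_X_mul_derivative]
  ring

theorem coeff_hAlphaNumerator_succ (α : R) (n k : ℕ) :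
    (hAlphaNumerator α (n + 1)).coeff k =
      rookNumber (n + 1) n k * ∏ ℓ ∈ range (n + 1 - k), (α + ℓ) := by
  induction n generalizing k with
  | zero =>
    cases k with
    | zero =>
      simp [hAlphaNumerator, logDerivNumerator, rookNumber_zero]
    | succ k =>
      rw [coeff_succ_hAlphaNumerator_succ, rookNumber_eq_zero_of_lt k.succ_pos]
      cases k <;> simp [hAlphaNumerator, logDerivNumerator, coeff_one]
  | succ n ih =>
    cases k with
    | zero =>
      rw [coeff_zero_hAlphaNumerator_succ, ih, rookNumber_zero, rookNumber_zero, Nat.sub_zero,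
        Nat.sub_zero, prod_range_succ _ (n + 1)]
      ring
    | succ k =>
      rw [coeff_succ_hAlphaNumerator_succ, ih, ih, rookNumber_succ_succ_succ]
      rcases le_or_gt k n with hk | hk
      · obtain ⟨d, rfl⟩ := Nat.exists_eq_add_of_le hk
        rw [show k + d + 1 + 1 - (k + 1) = d + 1 by lia, show k + d + 1 - (k + 1) = d by lia,
          show k + d + 1 - k = d + 1 by lia, prod_range_succ]
        push_cast
        ring
      · simp [rookNumber_eq_zero_of_lt hk, rookNumber_eq_zero_of_lt (hk.trans k.lt_succ_self)]

theorem eval_hAlphaNumerator (α t : R) {m : ℕ} (hm : 1 ≤ m) :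
    (hAlphaNumerator α m).eval t =
      ∑ k ∈ range m, rookNumber m (m - 1) k * (∏ ℓ ∈ range (m - k), (α + ℓ)) * t ^ k := by
  obtain ⟨n, rfl⟩ := Nat.exists_eq_add_of_le' hm
  have natDegree_lt : (hAlphaNumerator α (n + 1)).natDegree < n + 1 := by
    refine Nat.lt_succ_of_le (natDegree_le_iff_coeff_eq_zero.mpr fun k hk => ?_)
    rw [coeff_hAlphaNumerator_succ, rookNumber_eq_zero_of_lt hk, Nat.cast_zero, zero_mul]
  simp only [eval_eq_sum_range' natDegree_lt, coeff_hAlphaNumerator_succ, Nat.add_sub_cancel]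

end HAlphaNumerator

theorem hasDerivAt_one_add_one_div_rpow (α : ℝ) {t : ℝ} (ht : t ≠ 0) (ht' : 1 + t ≠ 0) :
    HasDerivAt (fun s : ℝ => (1 + 1 / s) ^ α) (α / -(t * (1 + t)) * (1 + 1 / t) ^ α) t := by
  have base_eq : 1 + 1 / t = (1 + t) / t := by field_simp; ring
  have base_ne : 1 + 1 / t ≠ 0 := base_eq ▸ div_ne_zero ht' ht
  have hasDerivAt_base : HasDerivAt (fun s : ℝ => 1 + 1 / s) (-(t ^ 2)⁻¹) t := by
    simpa only [one_div] using (hasDerivAt_inv ht).const_add 1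
  refine (hasDerivAt_base.rpow_const (p := α) (Or.inl base_ne)).congr_deriv ?_
  rw [Real.rpow_sub_one base_ne, base_eq]
  field_simp

theorem iteratedDeriv_one_add_one_div_rpow (α : ℝ) (m : ℕ) {t : ℝ} (ht : t ≠ 0)
    (ht' : 1 + t ≠ 0) :
    iteratedDeriv m (fun s : ℝ => (1 + 1 / s) ^ α) t =
      (-1) ^ m / (t ^ m * (1 + t) ^ m) * (1 + 1 / t) ^ α * (hAlphaNumerator α m).eval t := by
  have eval_denominator (s : ℝ) : (-(X * (1 + X)) : ℝ[X]).eval s = -(s * (1 + s)) := by simp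
  have isOpen_domain : IsOpen {s : ℝ | s ≠ 0 ∧ 1 + s ≠ 0} :=
    isOpen_ne.inter (isOpen_ne_fun (by fun_prop) continuous_const)
  have quotient_formula :=
    iteratedDeriv_eq_logDerivNumerator_div_mul (p := C α) (q := -(X * (1 + X))) isOpen_domain
      (fun s hs => eval_denominator s ▸ neg_ne_zero.mpr (mul_ne_zero hs.1 hs.2))
      (fun s hs => by
        rw [eval_C, eval_denominator]
        exact hasDerivAt_one_add_one_div_rpow α hs.1 hs.2) m ⟨ht, ht'⟩
  have sign_eq : (-(t * (1 + t))) ^ m = (-1) ^ m * (t ^ m * (1 + t) ^ m) := by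
    rw [neg_pow, mul_pow]
  have inv_sign : ((-1 : ℝ) ^ m)⁻¹ = (-1) ^ m := by rw [← inv_pow, inv_neg_one]
  rw [quotient_formula, ← hAlphaNumerator, eval_denominator, sign_eq, div_eq_mul_inv, mul_inv,
    inv_sign]
  ring

theorem h_alpha_iterated_deriv_formula_general
    (α : ℝ) (m : ℕ) (hm : 1 ≤ m) (t : ℝ) (ht : t < -1 ∨ 0 < t) :
    iteratedDeriv m (fun s : ℝ => (1 + 1 / s) ^ α) t =
      (-1 : ℝ) ^ m / (t ^ m * (1 + t) ^ m) * (1 + 1 / t) ^ α *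
        ∑ k ∈ Finset.range m,
          ((k.factorial : ℝ) * (m.choose k : ℝ) * ((m - 1).choose k : ℝ) *
            ∏ ℓ ∈ Finset.range (m - k), (α + ℓ)) * t ^ k := by
  have t_ne_zero : t ≠ 0 := by rintro rfl; norm_num at ht
  have one_add_t_ne_zero : 1 + t ≠ 0 := fun h => by rcases ht with ht | ht <;> linarith
  rw [iteratedDeriv_one_add_one_div_rpow α m t_ne_zero one_add_t_ne_zero,
    eval_hAlphaNumerator α t hm]
  simp only [rookNumber, Nat.cast_mul]

theorem h_alpha_iterated_deriv_formula
    (α : ℝ) (hα : α ∈ Set.Ioo (-1 : ℝ) 1)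
    (m : ℕ) (hm : 1 ≤ m) (t : ℝ) (ht : 0 < t) :
    iteratedDeriv m (fun s : ℝ => (1 + 1 / s) ^ α) t =
      (-1 : ℝ) ^ m / (t ^ m * (1 + t) ^ m) * (1 + 1 / t) ^ α *
        ∑ k ∈ Finset.range m,
          ((k.factorial : ℝ) * (m.choose k : ℝ) * ((m - 1).choose k : ℝ) *
            ∏ ℓ ∈ Finset.range (m - k), (α + ℓ)) * t ^ k :=
  h_alpha_iterated_deriv_formula_general α m hm t (Or.inr ht)
end

section
/- For α ∈ (0, 1), the function h_α(t) = (1 + 1/t)^α is completely monotonic on (0, ∞), i.e., h_α has derivatives of all orders on (0,∞) and (-1)^n h_α^(n)(t) ≥ 0 for all t > 0 and all integers n ≥ 0. -/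
open Real

/-!
Since `h_α' = -α h_α / (t (t + 1))`, the function `h_α` is a positive solution of a linear equation
`f' = -g f`, where `g` is completely monotone as a nonnegative multiple of the product of `1 / t`
and `1 / (t + 1)`. Expanding `f⁽ⁿ⁺¹⁾ = -(g f)⁽ⁿ⁾` by Leibniz' rule expresses `(-1)ⁿ⁺¹ f⁽ⁿ⁺¹⁾` as a
nonnegative combination of the products `(-1)ⁱ g⁽ⁱ⁾ · (-1)ⁿ⁻ⁱ f⁽ⁿ⁻ⁱ⁾`, so induction on the order
of the derivative shows that every such solution is completely monotone.
-/

open scoped ContDiff Nat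

section LinearODE

variable {𝕜 E : Type*} [NontriviallyNormedField 𝕜] [NormedAddCommGroup E] [NormedSpace 𝕜 E]

theorem contDiffOn_infty_of_hasDerivWithinAt_smul {f : 𝕜 → E} {g : 𝕜 → 𝕜} {s : Set 𝕜}
    (hs : UniqueDiffOn 𝕜 s) (hg : ContDiffOn 𝕜 ∞ g s)
    (hf : ∀ x ∈ s, HasDerivWithinAt f (g x • f x) s x) : ContDiffOn 𝕜 ∞ f s := by
  have hdiff : DifferentiableOn 𝕜 f s := fun x hx ↦ (hf x hx).differentiableWithinAt
  rw [contDiffOn_infty]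
  intro n
  induction n with
  | zero => exact contDiffOn_zero.mpr hdiff.continuousOn
  | succ n ih =>
    push_cast
    refine (contDiffOn_succ_iff_derivWithin hs).mpr ⟨hdiff, by simp, ?_⟩
    exact ((contDiffOn_infty.mp hg n).smul ih).congr fun x hx ↦ (hf x hx).derivWithin (hs x hx)

end LinearODE

/-- Complete monotonicity of a real function on a set `s`, usually an interval. Derivatives are
taken within `s`, so that endpoints may belong to `s`; this is only meaningful when `s` has unique
derivatives. -/
structure CompletelyMonotoneOn (f : ℝ → ℝ) (s : Set ℝ) : Prop where
  contDiffOn : ContDiffOn ℝ ∞ f s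
  neg_one_pow_mul_iteratedDerivWithin_nonneg (n : ℕ) (x : ℝ) (hx : x ∈ s) :
    0 ≤ (-1) ^ n * iteratedDerivWithin n f s x

section RealFunctions

variable {f g : ℝ → ℝ} {s : Set ℝ}

theorem completelyMonotoneOn_iff_of_isOpen (hs : IsOpen s) :
    CompletelyMonotoneOn f s ↔
      ContDiffOn ℝ ∞ f s ∧ ∀ n : ℕ, ∀ x ∈ s, 0 ≤ (-1) ^ n * iteratedDeriv n f x := by
  have hderiv (n : ℕ) (x : ℝ) (hx : x ∈ s) : iteratedDerivWithin n f s x = iteratedDeriv n f x :=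
    iteratedDerivWithin_of_isOpen hs hx
  constructor
  · rintro ⟨hf, hnonneg⟩
    exact ⟨hf, fun n x hx ↦ hderiv n x hx ▸ hnonneg n x hx⟩
  · rintro ⟨hf, hnonneg⟩
    exact ⟨hf, fun n x hx ↦ (hderiv n x hx).symm ▸ hnonneg n x hx⟩

theorem neg_one_pow_mul_iteratedDerivWithin_mul_nonneg {n : ℕ} {x : ℝ}
    (hs : UniqueDiffOn ℝ s) (hx : x ∈ s)
    (hf : ContDiffWithinAt ℝ n f s x) (hg : ContDiffWithinAt ℝ n g s x)
    (hf_nonneg : ∀ i ≤ n, 0 ≤ (-1) ^ i * iteratedDerivWithin i f s x)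
    (hg_nonneg : ∀ i ≤ n, 0 ≤ (-1) ^ i * iteratedDerivWithin i g s x) :
    0 ≤ (-1) ^ n * iteratedDerivWithin n (f * g) s x := by
  rw [iteratedDerivWithin_mul hx hs hf hg, Finset.mul_sum]
  refine Finset.sum_nonneg fun i hi ↦ ?_
  have hin : i ≤ n := Finset.mem_range_succ_iff.mp hi
  calc
    0 ≤ n.choose i * (((-1) ^ i * iteratedDerivWithin i f s x) *
          ((-1) ^ (n - i) * iteratedDerivWithin (n - i) g s x)) :=
      mul_nonneg (Nat.cast_nonneg _)
        (mul_nonneg (hf_nonneg i hin) (hg_nonneg (n - i) (Nat.sub_le n i)))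
    _ = (-1) ^ n * (n.choose i * iteratedDerivWithin i f s x *
          iteratedDerivWithin (n - i) g s x) := by
      rw [← pow_mul_pow_sub (-1 : ℝ) hin]
      ring

theorem completelyMonotoneOn_inv_add_const {c : ℝ} (hs : UniqueDiffOn ℝ s)
    (hpos : ∀ x ∈ s, 0 < x + c) : CompletelyMonotoneOn (fun x ↦ (x + c)⁻¹) s := by
  have hsmooth {m : ℕ∞ω} (x : ℝ) (hx : x ∈ s) : ContDiffAt ℝ m (fun x ↦ (x + c)⁻¹) x :=
    (contDiffAt_id.add contDiffAt_const).inv (hpos x hx).ne'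
  refine ⟨fun x hx ↦ (hsmooth x hx).contDiffWithinAt, fun n x hx ↦ ?_⟩
  have hderiv : iteratedDeriv n (fun x ↦ (x + c)⁻¹) x =
      (-1) ^ n * n ! * (x + c) ^ (-1 - n : ℤ) := by
    simpa [iteratedDeriv_eq_iterate] using congrFun (iter_deriv_inv_linear n (1 : ℝ) c) x
  calc
    0 ≤ n ! * (x + c) ^ (-1 - n : ℤ) :=
      mul_nonneg (Nat.cast_nonneg _) (zpow_nonneg (hpos x hx).le _)
    _ = (-1) ^ n * ((-1) ^ n * n ! * (x + c) ^ (-1 - n : ℤ)) := by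
      rw [mul_assoc, ← mul_assoc, ← mul_pow]
      simp
    _ = (-1) ^ n * iteratedDerivWithin n (fun x ↦ (x + c)⁻¹) s x := by
      rw [iteratedDerivWithin_eq_iteratedDeriv hs (hsmooth x hx) hx, hderiv]

namespace CompletelyMonotoneOn

theorem const_mul {c : ℝ} (hf : CompletelyMonotoneOn f s) (hc : 0 ≤ c) :
    CompletelyMonotoneOn (fun x ↦ c * f x) s where
  contDiffOn := contDiffOn_const.mul hf.contDiffOn
  neg_one_pow_mul_iteratedDerivWithin_nonneg n x hx := by
    rw [iteratedDerivWithin_const_mul_field, mul_left_comm]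
    exact mul_nonneg hc (hf.neg_one_pow_mul_iteratedDerivWithin_nonneg n x hx)

theorem mul (hf : CompletelyMonotoneOn f s) (hs : UniqueDiffOn ℝ s)
    (hg : CompletelyMonotoneOn g s) : CompletelyMonotoneOn (f * g) s where
  contDiffOn := hf.contDiffOn.mul hg.contDiffOn
  neg_one_pow_mul_iteratedDerivWithin_nonneg n x hx :=
    neg_one_pow_mul_iteratedDerivWithin_mul_nonneg hs hx
      (contDiffOn_infty.mp hf.contDiffOn n x hx) (contDiffOn_infty.mp hg.contDiffOn n x hx)
      (fun i _ ↦ hf.neg_one_pow_mul_iteratedDerivWithin_nonneg i x hx)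
      (fun i _ ↦ hg.neg_one_pow_mul_iteratedDerivWithin_nonneg i x hx)

theorem of_hasDerivWithinAt_neg_mul (hs : UniqueDiffOn ℝ s) (hg : CompletelyMonotoneOn g s)
    (hf_nonneg : ∀ x ∈ s, 0 ≤ f x) (hf : ∀ x ∈ s, HasDerivWithinAt f (-(g x * f x)) s x) :
    CompletelyMonotoneOn f s := by
  have hsmooth : ContDiffOn ℝ ∞ f s :=
    contDiffOn_infty_of_hasDerivWithinAt_smul (g := -g) hs hg.contDiffOn.neg fun x hx ↦ by
      simpa using hf x hx
  refine ⟨hsmooth, fun n x hx ↦ ?_⟩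
  induction n using Nat.strong_induction_on with
  | _ n ih =>
    cases n with
    | zero => simpa using hf_nonneg x hx
    | succ n =>
      have hderiv : Set.EqOn (derivWithin f s) (-(g * f)) s := fun y hy ↦
        (hf y hy).derivWithin (hs y hy)
      calc
        0 ≤ (-1) ^ n * iteratedDerivWithin n (g * f) s x :=
          neg_one_pow_mul_iteratedDerivWithin_mul_nonneg hs hx
            (contDiffOn_infty.mp hg.contDiffOn n x hx) (contDiffOn_infty.mp hsmooth n x hx)
            (fun i _ ↦ hg.neg_one_pow_mul_iteratedDerivWithin_nonneg i x hx)
            (fun i hi ↦ ih i (Nat.lt_succ_of_le hi))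
        _ = (-1) ^ (n + 1) * iteratedDerivWithin (n + 1) f s x := by
          rw [iteratedDerivWithin_succ', iteratedDerivWithin_congr hderiv hx,
            iteratedDerivWithin_neg]
          ring

theorem rpow_const_of_hasDerivWithinAt_neg_mul {α : ℝ} (hs : UniqueDiffOn ℝ s) (hα : 0 ≤ α)
    (hg : CompletelyMonotoneOn g s) (hf_pos : ∀ x ∈ s, 0 < f x)
    (hf : ∀ x ∈ s, HasDerivWithinAt f (-(g x * f x)) s x) :
    CompletelyMonotoneOn (fun x ↦ f x ^ α) s := by
  refine of_hasDerivWithinAt_neg_mul hs (hg.const_mul hα)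
    (fun x hx ↦ rpow_nonneg (hf_pos x hx).le α) fun x hx ↦ ?_
  have hfx : f x ≠ 0 := (hf_pos x hx).ne'
  refine ((hf x hx).rpow_const (p := α) (Or.inl hfx)).congr_deriv ?_
  rw [rpow_sub_one hfx]
  field_simp

end CompletelyMonotoneOn

end RealFunctions

theorem hasDerivAt_one_add_one_div {t : ℝ} (ht : t ≠ 0) (ht_add : t + 1 ≠ 0) :
    HasDerivAt (fun s ↦ 1 + 1 / s) (-(t⁻¹ * (t + 1)⁻¹ * (1 + 1 / t))) t := by
  have hderiv : HasDerivAt (fun s ↦ 1 + 1 / s) (-(t ^ 2)⁻¹) t := by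
    simpa using (hasDerivAt_inv ht).const_add 1
  exact hderiv.congr_deriv (by field_simp)

theorem h_alpha_completely_monotonic_general {α : ℝ} (hα : 0 ≤ α) :
    CompletelyMonotoneOn (fun s ↦ (1 + 1 / s) ^ α) (Set.Ioi 0) := by
  have hs : UniqueDiffOn ℝ (Set.Ioi (0 : ℝ)) := uniqueDiffOn_Ioi 0
  have hinv : CompletelyMonotoneOn (fun t ↦ t⁻¹) (Set.Ioi 0) := by
    simpa using completelyMonotoneOn_inv_add_const (c := 0) hs (by simp)
  have hinv_add_one : CompletelyMonotoneOn (fun t ↦ (t + 1)⁻¹) (Set.Ioi 0) :=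
    completelyMonotoneOn_inv_add_const hs fun t (ht : 0 < t) ↦ by positivity
  refine .rpow_const_of_hasDerivWithinAt_neg_mul hs hα (hinv.mul hs hinv_add_one)
    (fun t (ht : 0 < t) ↦ by positivity) fun t (ht : 0 < t) ↦ ?_
  exact (hasDerivAt_one_add_one_div ht.ne' (by positivity)).hasDerivWithinAt

theorem h_alpha_completely_monotonic
    (α : ℝ) (hα : α ∈ Set.Ioo (0 : ℝ) 1) :
    ContDiffOn ℝ (⊤ : ℕ∞) (fun s : ℝ => (1 + 1 / s) ^ α) (Set.Ioi 0) ∧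
      ∀ n : ℕ, ∀ t : ℝ, 0 < t →
        0 ≤ (-1 : ℝ) ^ n * iteratedDeriv n (fun s : ℝ => (1 + 1 / s) ^ α) t :=
  (completelyMonotoneOn_iff_of_isOpen isOpen_Ioi).mp (h_alpha_completely_monotonic_general hα.1.le)
end

section
/- For α ∈ (-1, 1) and every real t > 0, the function h_α(t) = (1 + 1/t)^α has the integral representation h_α(t) = 1 + (sin(απ)/π) · ∫₀¹ (1/u − 1)^α / (u + t) du. -/
open Real

/-!
The substitution `x = 1 / u - 1` maps `(0, 1)` onto `(0, ∞)` and turns the integral into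
`∫ x in (0, ∞), x ^ α * (1 / (x + 1) - 1 / (x + c))` with `c = 1 + 1 / t`. Euler's reflection
formula gives `∫ x in (0, ∞), x ^ p / (x + 1) = -π / sin (p π)` for `-1 < p < 0`, and scaling
replaces `x + 1` by `x + c` at the cost of a factor `c ^ p`. For `α < 0` one takes `p = α` in both
terms; for `0 < α`, the identity `x / (x + c) = 1 - c / (x + c)` reduces to `p = α - 1`.
-/

open Set MeasureTheory

section InvSubOneSubstitution

lemma image_inv_sub_one_Ioo_zero_one : (fun u : ℝ => u⁻¹ - 1) '' Ioo 0 1 = Ioi 0 := by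
  calc (fun u : ℝ => u⁻¹ - 1) '' Ioo 0 1 = (· - 1) '' (Ioo 0 1)⁻¹ := by
        rw [← image_inv_eq_inv, image_image]
    _ = Ioi 0 := by rw [inv_Ioo_0_left one_pos, inv_one, image_sub_const_Ioi, sub_self]

lemma antitoneOn_inv_sub_one : AntitoneOn (fun u : ℝ => u⁻¹ - 1) (Ioo 0 1) :=
  fun _ hu _ _ huv => sub_le_sub_right (inv_anti₀ hu.1 huv) 1

lemma hasDerivWithinAt_inv_sub_one {u : ℝ} (hu : u ≠ 0) (s : Set ℝ) :
    HasDerivWithinAt (fun u : ℝ => u⁻¹ - 1) (-(u ^ 2)⁻¹) s u :=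
  ((hasDerivAt_inv hu).sub_const 1).hasDerivWithinAt

variable {E : Type*} [NormedAddCommGroup E] [NormedSpace ℝ E] (g : ℝ → E)

lemma integrableOn_Ioi_iff_integrableOn_Ioo_comp_inv_sub_one :
    IntegrableOn g (Ioi 0) ↔ IntegrableOn (fun u => (u ^ 2)⁻¹ • g (u⁻¹ - 1)) (Ioo 0 1) := by
  simpa only [image_inv_sub_one_Ioo_zero_one, neg_neg] using
    integrableOn_image_iff_integrableOn_deriv_smul_of_antitoneOn measurableSet_Ioo
      (fun u hu => hasDerivWithinAt_inv_sub_one hu.1.ne' _) antitoneOn_inv_sub_one g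

lemma integral_Ioi_eq_integral_Ioo_comp_inv_sub_one :
    ∫ x in Ioi 0, g x = ∫ u in Ioo 0 1, (u ^ 2)⁻¹ • g (u⁻¹ - 1) := by
  simpa only [image_inv_sub_one_Ioo_zero_one, neg_neg] using
    integral_image_eq_integral_deriv_smul_of_antitoneOn measurableSet_Ioo
      (fun u hu => hasDerivWithinAt_inv_sub_one hu.1.ne' _) antitoneOn_inv_sub_one g

end InvSubOneSubstitution

section MellinTransform

lemma eqOn_mellin_integrand_betaIntegral_integrand (a b : ℂ) :
    EqOn (fun u : ℝ => (u ^ 2)⁻¹ •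
        (((u⁻¹ - 1 : ℝ) : ℂ) ^ (a - 1) • (1 + ((u⁻¹ - 1 : ℝ) : ℂ)) ^ (-(a + b))))
      (fun u => (u : ℂ) ^ (b - 1) * (1 - (u : ℂ)) ^ (a - 1)) (Ioo 0 1) := by
  intro u hu
  have hu₀ : (u : ℂ) ≠ 0 := Complex.ofReal_ne_zero.2 hu.1.ne'
  have hinv (z : ℂ) : ((u⁻¹ : ℝ) : ℂ) ^ z = (u : ℂ) ^ (-z) := by
    have harg : Complex.arg u ≠ π := by
      rw [Complex.arg_ofReal_of_nonneg hu.1.le]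
      exact pi_pos.ne
    rw [Complex.ofReal_inv, Complex.cpow_neg, Complex.inv_cpow _ _ harg]
  have hsub : ((u⁻¹ - 1 : ℝ) : ℂ) = (u⁻¹ : ℝ) * (1 - u : ℝ) := by
    push_cast
    field_simp
  have hsq : (((u ^ 2)⁻¹ : ℝ) : ℂ) = (u : ℂ) ^ (-2 : ℂ) := by
    rw [Complex.cpow_neg]
    norm_cast
  calc (u ^ 2)⁻¹ • (((u⁻¹ - 1 : ℝ) : ℂ) ^ (a - 1) • (1 + ((u⁻¹ - 1 : ℝ) : ℂ)) ^ (-(a + b)))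
      = (u : ℂ) ^ (-2 : ℂ) * ((u : ℂ) ^ (-(a - 1)) * (1 - u : ℝ) ^ (a - 1) *
          (u : ℂ) ^ (a + b)) := by
        rw [Complex.real_smul, smul_eq_mul, hsq, ← Complex.ofReal_one, ← Complex.ofReal_add,
          add_sub_cancel, hinv, neg_neg, Complex.ofReal_one, hsub,
          Complex.mul_cpow_ofReal_nonneg (inv_pos.2 hu.1).le (sub_pos.2 hu.2).le, hinv]
    _ = (u : ℂ) ^ (-2 + -(a - 1) + (a + b)) * (1 - u : ℝ) ^ (a - 1) := by
        rw [Complex.cpow_add _ (a + b) hu₀, Complex.cpow_add (-2) _ hu₀]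
        ring
    _ = (u : ℂ) ^ (b - 1) * (1 - (u : ℂ)) ^ (a - 1) := by
        rw [show -2 + -(a - 1) + (a + b) = b - 1 by ring, Complex.ofReal_sub, Complex.ofReal_one]

theorem hasMellin_one_add_cpow_neg {a b : ℂ} (ha : 0 < a.re) (hb : 0 < b.re) :
    HasMellin (fun x : ℝ => (1 + (x : ℂ)) ^ (-(a + b))) a (Complex.betaIntegral a b) := by
  have hEq := eqOn_mellin_integrand_betaIntegral_integrand a b
  constructor
  · rw [MellinConvergent, integrableOn_Ioi_iff_integrableOn_Ioo_comp_inv_sub_one,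
      integrableOn_congr_fun hEq measurableSet_Ioo,
      ← intervalIntegrable_iff_integrableOn_Ioo_of_le zero_le_one]
    exact Complex.betaIntegral_convergent hb ha
  · rw [mellin, integral_Ioi_eq_integral_Ioo_comp_inv_sub_one,
      setIntegral_congr_fun measurableSet_Ioo hEq, ← integral_Ioc_eq_integral_Ioo,
      ← intervalIntegral.integral_of_le zero_le_one, Complex.betaIntegral_symm,
      Complex.betaIntegral]

theorem betaIntegral_one_sub {a : ℂ} (ha₀ : 0 < a.re) (ha₁ : a.re < 1) :
    Complex.betaIntegral a (1 - a) = π / Complex.sin (π * a) := by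
  have h := Complex.Gamma_mul_Gamma_eq_betaIntegral ha₀ (t := 1 - a) (by simpa using ha₁)
  rwa [add_sub_cancel, Complex.Gamma_one, one_mul, Complex.Gamma_mul_Gamma_one_sub, eq_comm] at h

theorem hasMellin_one_add_inv {a : ℂ} (ha₀ : 0 < a.re) (ha₁ : a.re < 1) :
    HasMellin (fun x : ℝ => (1 + (x : ℂ))⁻¹) a (π / Complex.sin (π * a)) := by
  simpa only [add_sub_cancel, Complex.cpow_neg_one, betaIntegral_one_sub ha₀ ha₁] using
    hasMellin_one_add_cpow_neg ha₀ (b := 1 - a) (by simpa using ha₁)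

end MellinTransform

section StieltjesKernel

variable {p c : ℝ}

lemma eqOn_mellin_integrand_one_add_inv_ofReal (p : ℝ) :
    EqOn (fun x : ℝ => (x : ℂ) ^ (((p + 1 : ℝ) : ℂ) - 1) • (1 + (x : ℂ))⁻¹)
      (fun x => ((x ^ p * (x + 1)⁻¹ : ℝ) : ℂ)) (Ioi 0) := by
  intro x (hx : 0 < x)
  have hexp : (((p + 1 : ℝ) : ℂ) - 1) = p := by push_cast; ring
  simp only [hexp, smul_eq_mul, ← Complex.ofReal_cpow hx.le, add_comm 1 (x : ℂ)]
  push_cast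
  rfl

lemma hasMellin_one_add_inv_ofReal (hp : p ∈ Ioo (-1) 0) :
    HasMellin (fun x : ℝ => (1 + (x : ℂ))⁻¹) ((p + 1 : ℝ) : ℂ)
      (π / Complex.sin (π * ((p + 1 : ℝ) : ℂ))) := by
  apply hasMellin_one_add_inv
  · rw [Complex.ofReal_re]
    linarith [hp.1]
  · rw [Complex.ofReal_re]
    linarith [hp.2]

lemma integrableOn_rpow_mul_inv_add_one (hp : p ∈ Ioo (-1) 0) :
    IntegrableOn (fun x : ℝ => x ^ p * (x + 1)⁻¹) (Ioi 0) := by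
  have h := (hasMellin_one_add_inv_ofReal hp).1
  rw [MellinConvergent, integrableOn_congr_fun
    (eqOn_mellin_integrand_one_add_inv_ofReal p) measurableSet_Ioi] at h
  exact h.re

lemma integral_rpow_mul_inv_add_one (hp : p ∈ Ioo (-1) 0) :
    ∫ x in Ioi (0 : ℝ), x ^ p * (x + 1)⁻¹ = -(π / sin (p * π)) := by
  have h := (hasMellin_one_add_inv_ofReal hp).2
  rw [mellin, setIntegral_congr_fun measurableSet_Ioi
    (eqOn_mellin_integrand_one_add_inv_ofReal p), integral_complex_ofReal] at h
  have hsin : sin (π * (p + 1)) = -sin (p * π) := by rw [mul_add, mul_one, sin_add_pi, mul_comm]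
  rw [← div_neg, ← hsin]
  exact_mod_cast h

lemma eqOn_rpow_mul_inv_add_comp_inv_mul (p : ℝ) (hc : 0 < c) :
    EqOn (fun x : ℝ => x ^ p * (x + c)⁻¹)
      (fun x => c ^ p * c⁻¹ * ((c⁻¹ * x) ^ p * (c⁻¹ * x + 1)⁻¹)) (Ioi 0) := by
  intro x (hx : 0 < x)
  simp only [mul_rpow (inv_pos.2 hc).le hx.le, inv_rpow hc.le]
  have hcp : c ^ p ≠ 0 := (rpow_pos_of_pos hc p).ne'
  field_simp

theorem integrableOn_rpow_mul_inv_add (hp : p ∈ Ioo (-1) 0) (hc : 0 < c) :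
    IntegrableOn (fun x : ℝ => x ^ p * (x + c)⁻¹) (Ioi 0) := by
  rw [integrableOn_congr_fun (eqOn_rpow_mul_inv_add_comp_inv_mul p hc) measurableSet_Ioi]
  refine Integrable.const_mul ?_ _
  refine (integrableOn_Ioi_comp_mul_left_iff (fun x => x ^ p * (x + 1)⁻¹) 0 (inv_pos.2 hc)).2 ?_
  rw [mul_zero]
  exact integrableOn_rpow_mul_inv_add_one hp

theorem integral_rpow_mul_inv_add (hp : p ∈ Ioo (-1) 0) (hc : 0 < c) :
    ∫ x in Ioi (0 : ℝ), x ^ p * (x + c)⁻¹ = -(π / sin (p * π)) * c ^ p := by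
  rw [setIntegral_congr_fun measurableSet_Ioi (eqOn_rpow_mul_inv_add_comp_inv_mul p hc),
    integral_const_mul,
    integral_comp_mul_left_Ioi (fun x => x ^ p * (x + 1)⁻¹) 0 (inv_pos.2 hc), mul_zero,
    integral_rpow_mul_inv_add_one hp, inv_inv, smul_eq_mul]
  field_simp

end StieltjesKernel

section StieltjesKernelDifference

variable {α b c : ℝ}

lemma sin_mul_pi_ne_zero (h₁ : α ∈ Ioo (-1) 1) (h₀ : α ≠ 0) : sin (α * π) ≠ 0 := by
  have := pi_pos
  rw [Ne, sin_eq_zero_iff_of_lt_of_lt (by nlinarith [h₁.1]) (by nlinarith [h₁.2])]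
  positivity

lemma integral_rpow_mul_inv_add_sub_inv_add_of_neg (hα : α ∈ Ioo (-1) 0) (hb : 0 < b)
    (hc : 0 < c) :
    ∫ x in Ioi (0 : ℝ), x ^ α * ((x + b)⁻¹ - (x + c)⁻¹) =
      π / sin (α * π) * (c ^ α - b ^ α) := by
  simp_rw [mul_sub]
  rw [integral_sub (integrableOn_rpow_mul_inv_add hα hb) (integrableOn_rpow_mul_inv_add hα hc),
    integral_rpow_mul_inv_add hα hb, integral_rpow_mul_inv_add hα hc]
  ring

-- The two terms diverge separately; by `x / (x + b) = 1 - b / (x + b)` the difference is also one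
-- of convergent terms with exponent `α - 1`.
lemma integral_rpow_mul_inv_add_sub_inv_add_of_pos (hα : α ∈ Ioo 0 1) (hb : 0 < b)
    (hc : 0 < c) :
    ∫ x in Ioi (0 : ℝ), x ^ α * ((x + b)⁻¹ - (x + c)⁻¹) =
      π / sin (α * π) * (c ^ α - b ^ α) := by
  have hp : α - 1 ∈ Ioo (-1) 0 := ⟨by linarith [hα.1], by linarith [hα.2]⟩
  have hsin : sin ((α - 1) * π) = -sin (α * π) := by rw [sub_mul, one_mul, sin_sub_pi]
  have hEq : EqOn (fun x : ℝ => x ^ α * ((x + b)⁻¹ - (x + c)⁻¹))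
      (fun x => c * (x ^ (α - 1) * (x + c)⁻¹) - b * (x ^ (α - 1) * (x + b)⁻¹)) (Ioi 0) := by
    intro x (hx : 0 < x)
    simp only [rpow_sub_one hx.ne']
    field_simp
    ring
  rw [setIntegral_congr_fun measurableSet_Ioi hEq,
    integral_sub ((integrableOn_rpow_mul_inv_add hp hc).const_mul c)
      ((integrableOn_rpow_mul_inv_add hp hb).const_mul b),
    integral_const_mul, integral_const_mul, integral_rpow_mul_inv_add hp hc,
    integral_rpow_mul_inv_add hp hb, hsin, rpow_sub_one hb.ne', rpow_sub_one hc.ne']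
  field_simp

theorem sin_div_pi_mul_integral_rpow_mul_inv_add_sub_inv_add (hα : α ∈ Ioo (-1) 1) (hb : 0 < b)
    (hc : 0 < c) :
    sin (α * π) / π * ∫ x in Ioi (0 : ℝ), x ^ α * ((x + b)⁻¹ - (x + c)⁻¹) = c ^ α - b ^ α := by
  rcases eq_or_ne α 0 with rfl | h₀
  · simp
  have hsin := sin_mul_pi_ne_zero hα h₀
  have hint : ∫ x in Ioi (0 : ℝ), x ^ α * ((x + b)⁻¹ - (x + c)⁻¹) =
      π / sin (α * π) * (c ^ α - b ^ α) := by
    rcases h₀.lt_or_gt with hneg | hpos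
    · exact integral_rpow_mul_inv_add_sub_inv_add_of_neg ⟨hα.1, hneg⟩ hb hc
    · exact integral_rpow_mul_inv_add_sub_inv_add_of_pos ⟨hpos, hα.2⟩ hb hc
  rw [hint]
  field_simp

end StieltjesKernelDifference

lemma one_add_one_div_pos {t : ℝ} (ht : t ∉ Icc (-1) 0) : 0 < 1 + 1 / t := by
  rcases lt_or_ge 0 t with hpos | hnonpos
  · positivity
  · have hadd : t + 1 < 0 := by
      by_contra! h
      exact ht ⟨by linarith, hnonpos⟩
    have hneg : t < 0 := by linarith
    calc 0 < (t + 1) / t := div_pos_of_neg_of_neg hadd hneg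
      _ = 1 + 1 / t := by rw [add_div, div_self hneg.ne]

lemma integral_one_div_sub_one_rpow_div_add (α : ℝ) {t : ℝ} (ht : t ∉ Icc (-1) 0) :
    ∫ u in (0 : ℝ)..1, (1 / u - 1) ^ α / (u + t) =
      ∫ x in Ioi (0 : ℝ), x ^ α * ((x + 1)⁻¹ - (x + (1 + 1 / t))⁻¹) := by
  rw [integral_Ioi_eq_integral_Ioo_comp_inv_sub_one, intervalIntegral.integral_of_le zero_le_one,
    integral_Ioc_eq_integral_Ioo]
  refine setIntegral_congr_fun measurableSet_Ioo fun u hu => ?_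
  have hu₀ : u ≠ 0 := hu.1.ne'
  have ht₀ : t ≠ 0 := by rintro rfl; simp at ht
  have hut : u + t ≠ 0 := fun h => ht ⟨by linarith [hu.2], by linarith [hu.1]⟩
  have hadd : u⁻¹ - 1 + (1 + 1 / t) = (u + t) / (u * t) := by
    field_simp
    ring
  have hkernel : (u ^ 2)⁻¹ * ((u⁻¹ - 1 + 1)⁻¹ - (u⁻¹ - 1 + (1 + 1 / t))⁻¹) = (u + t)⁻¹ := by
    rw [hadd, sub_add_cancel, inv_inv]
    field_simp
    ring
  rw [smul_eq_mul, mul_left_comm, hkernel, one_div, div_eq_mul_inv]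

theorem h_alpha_integral_representation_real_general
    (α : ℝ) (hα : α ∈ Ioo (-1 : ℝ) 1) (t : ℝ) (ht : t ∉ Icc (-1 : ℝ) 0) :
    (1 + 1 / t) ^ α =
      1 + sin (α * π) / π * ∫ u in (0 : ℝ)..1, (1 / u - 1) ^ α / (u + t) := by
  rw [integral_one_div_sub_one_rpow_div_add α ht,
    sin_div_pi_mul_integral_rpow_mul_inv_add_sub_inv_add hα one_pos (one_add_one_div_pos ht),
    one_rpow, add_sub_cancel]

theorem h_alpha_integral_representation_real
    (α : ℝ) (hα : α ∈ Set.Ioo (-1 : ℝ) 1) (t : ℝ) (ht : 0 < t) :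
    (1 + 1 / t) ^ α =
      1 + Real.sin (α * π) / π *
        ∫ u in (0 : ℝ)..1, (1 / u - 1) ^ α / (u + t) :=
  h_alpha_integral_representation_real_general α hα t fun h => h.2.not_gt ht
end

section
/- Let α ∈ (-1, 1) and let z ∈ ℂ \ (−∞, 0]. Then the principal branch of h_α(z) = (1 + 1/z)^α satisfies h_α(z) = 1 + (sin(απ)/π) · ∫₀¹ (1/u − 1)^α / (u + z) du, where the integral is a complex-valued integral over u ∈ (0,1). -/
open Real Complex

/-!
The function `(1 + 1 / z) ^ α` is the solution of `z (z + 1) f' = -α f` that tends to `1` at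
infinity: multiplying any other such solution by `(1 + 1 / z) ^ (-α)` gives a function with zero
derivative off `[-1, 0]`, and this region contains the ray `{t z | 1 ≤ t}` through each of its
points `z`. The right-hand side of the representation solves the same equation. Indeed its weight
`(1 / u - 1) ^ α` is the Beta density `u ^ (p - 1) (1 - u) ^ (q - 1)` with `p = 1 - α`,
`q = 1 + α`, and integrating the derivative of `u ^ p (1 - u) ^ q / (u + z)` over `[0, 1]` yields
a first order equation for the Stieltjes transform of that density. The constant term of this
equation is `B(1 - α, 1 + α) = π α / sin (π α)`, which the factor `sin (α π) / π` turns into `α`.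
-/

section

open MeasureTheory Filter Topology Set Bornology

section StieltjesTransform

/-- The Stieltjes transform `z ↦ ∫ w(u) / (u + z) du` over `[a, b]` of a density `w`, with the sign
convention that makes it singular on `[-b, -a]`. -/
noncomputable def stieltjesTransform (w : ℝ → ℂ) (a b : ℝ) (z : ℂ) : ℂ :=
  ∫ u in a..b, w u / ((u : ℂ) + z)

lemma stieltjesTransform_congr {w₁ w₂ : ℝ → ℂ} {a b : ℝ} (h : EqOn w₁ w₂ (uIoc a b)) :
    stieltjesTransform w₁ a b = stieltjesTransform w₂ a b := by
  ext z
  refine intervalIntegral.integral_congr_ae (ae_of_all _ fun u hu => ?_)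
  simp only [h hu]

lemma exists_pos_forall_mem_ball_le_norm_add {X E : Type*} [TopologicalSpace X]
    [NormedAddCommGroup E] {K : Set X} (hK : IsCompact K) {f : X → E} (hf : ContinuousOn f K)
    {z : E} (hz : ∀ u ∈ K, f u + z ≠ 0) :
    ∃ ε > 0, ∀ x ∈ Metric.ball z ε, ∀ u ∈ K, ε ≤ ‖f u + x‖ := by
  obtain ⟨δ, hδ, hδK⟩ := hK.exists_forall_le' (hf.add continuousOn_const).norm
    fun u hu => norm_pos_iff.2 (hz u hu)
  refine ⟨δ / 2, half_pos hδ, fun x hx u hu => ?_⟩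
  have hxz : ‖x - z‖ < δ / 2 := mem_ball_iff_norm.1 hx
  have htri : ‖f u + z‖ ≤ ‖f u + x‖ + ‖x - z‖ := by
    simpa [add_sub_assoc] using norm_sub_le (f u + x) (x - z)
  have hδu : δ ≤ ‖f u + z‖ := hδK u hu
  linarith

variable {w : ℝ → ℂ} {a b : ℝ}

lemma continuousOn_inv_ofReal_add {z : ℂ} {s : Set ℝ} (hz : ∀ u ∈ s, (u : ℂ) + z ≠ 0) :
    ContinuousOn (fun u : ℝ => ((u : ℂ) + z)⁻¹) s :=
  ContinuousOn.inv₀ (by fun_prop) hz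

lemma aestronglyMeasurable_div_ofReal_add (hw : IntervalIntegrable w volume a b) (z : ℂ) :
    AEStronglyMeasurable (fun u : ℝ => w u / ((u : ℂ) + z)) (volume.restrict (uIoc a b)) :=
  hw.def'.aestronglyMeasurable.div₀ (by fun_prop)

lemma intervalIntegrable_div_ofReal_add (hw : IntervalIntegrable w volume a b) {z : ℂ}
    (hz : ∀ u ∈ uIcc a b, (u : ℂ) + z ≠ 0) :
    IntervalIntegrable (fun u : ℝ => w u / ((u : ℂ) + z)) volume a b :=
  hw.mul_continuousOn (continuousOn_inv_ofReal_add hz)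

theorem hasDerivAt_stieltjesTransform (hw : IntervalIntegrable w volume a b) {z : ℂ}
    (hz : ∀ u ∈ uIcc a b, (u : ℂ) + z ≠ 0) :
    HasDerivAt (stieltjesTransform w a b) (∫ u in a..b, w u * -(((u : ℂ) + z)⁻¹ ^ 2)) z := by
  obtain ⟨ε, hε, hle⟩ := exists_pos_forall_mem_ball_le_norm_add isCompact_uIcc
    continuous_ofReal.continuousOn hz
  refine (intervalIntegral.hasDerivAt_integral_of_dominated_loc_of_deriv_le
    (F' := fun x u => w u * -(((u : ℂ) + x)⁻¹ ^ 2)) (bound := fun u => ‖w u‖ * ε⁻¹ ^ 2)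
    (Metric.ball_mem_nhds z hε)
    (Eventually.of_forall (aestronglyMeasurable_div_ofReal_add hw))
    (intervalIntegrable_div_ofReal_add hw hz)
    (hw.mul_continuousOn ((continuousOn_inv_ofReal_add hz).pow 2).neg).def'.aestronglyMeasurable
    (ae_of_all _ fun u hu x hx => ?_) (hw.norm.mul_const _)
    (ae_of_all _ fun u hu x hx => ?_)).2
  · rw [norm_mul, norm_neg, norm_pow, norm_inv]
    gcongr
    exact hle x hx u (uIoc_subset_uIcc hu)
  · have hne : (u : ℂ) + x ≠ 0 :=
      norm_pos_iff.1 (hε.trans_le (hle x hx u (uIoc_subset_uIcc hu)))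
    simpa [div_eq_mul_inv] using
      (((hasDerivAt_id x).const_add (u : ℂ)).fun_inv hne).const_mul (w u)

theorem tendsto_stieltjesTransform_cobounded (hw : IntervalIntegrable w volume a b) :
    Tendsto (stieltjesTransform w a b) (cobounded ℂ) (𝓝 0) := by
  have hfar : ∀ᶠ z : ℂ in cobounded ℂ, ∀ u ∈ uIoc a b, 1 ≤ ‖(u : ℂ) + z‖ := by
    filter_upwards [tendsto_norm_cobounded_atTop.eventually_ge_atTop (max |a| |b| + 1)]
      with z hz u hu
    have hu' : ‖(u : ℂ)‖ ≤ max |a| |b| := by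
      rw [norm_real, Real.norm_eq_abs]
      rcases mem_uIoc.1 hu with h | h
      · exact abs_le_max_abs_abs h.1.le h.2
      · exact max_comm |a| |b| ▸ abs_le_max_abs_abs h.1.le h.2
    have htri : ‖z‖ ≤ ‖(u : ℂ) + z‖ + ‖(u : ℂ)‖ := by
      simpa using norm_sub_le ((u : ℂ) + z) u
    linarith
  have hlim (u : ℝ) : Tendsto (fun z : ℂ => w u / ((u : ℂ) + z)) (cobounded ℂ) (𝓝 0) := by
    simpa [div_eq_mul_inv] using
      (tendsto_inv₀_cobounded.comp (tendsto_const_add_cobounded (u : ℂ))).const_mul (w u)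
  have : (cobounded ℂ).IsCountablyGenerated := comap_norm_atTop (E := ℂ) ▸ inferInstance
  have hmain := intervalIntegral.tendsto_integral_filter_of_dominated_convergence
    (fun u => ‖w u‖) (Eventually.of_forall (aestronglyMeasurable_div_ofReal_add hw))
    (hfar.mono fun z hz => ae_of_all _ fun u hu => ?_) hw.norm (ae_of_all _ fun u _ => hlim u)
  · rwa [intervalIntegral.integral_zero] at hmain
  · rw [norm_div]
    exact div_le_self (norm_nonneg _) (hz u hu)

end StieltjesTransform

section BetaDensity

/-- The unnormalised density of the Beta distribution with complex parameters `p` and `q`, that is,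
the integrand of `Complex.betaIntegral p q`. -/
noncomputable def betaDensity (p q : ℂ) (u : ℝ) : ℂ :=
  (u : ℂ) ^ (p - 1) * (1 - (u : ℂ)) ^ (q - 1)

variable {p q : ℂ}

lemma intervalIntegrable_betaDensity (hp : 0 < p.re) (hq : 0 < q.re) :
    IntervalIntegrable (betaDensity p q) volume 0 1 :=
  betaIntegral_convergent hp hq

lemma intervalIntegrable_betaDensity_mul (hp : 0 < p.re) (hq : 0 < q.re) {g : ℝ → ℂ}
    (hg : ContinuousOn g (Icc 0 1)) :
    IntervalIntegrable (fun u => betaDensity p q u * g u) volume 0 1 :=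
  (intervalIntegrable_betaDensity hp hq).mul_continuousOn (by rwa [uIcc_of_le zero_le_one])

lemma cpow_mul_one_sub_cpow_eq_betaDensity_mul {u : ℝ} (hu : u ∈ Ioo (0 : ℝ) 1) :
    (u : ℂ) ^ p * (1 - (u : ℂ)) ^ q = betaDensity p q u * (u * (1 - u)) := by
  have hu₀ : (u : ℂ) ≠ 0 := ofReal_ne_zero.2 hu.1.ne'
  have hu₁ : 1 - (u : ℂ) ≠ 0 := by exact_mod_cast (sub_pos.2 hu.2).ne'
  rw [betaDensity, cpow_sub _ _ hu₀, cpow_sub _ _ hu₁, cpow_one, cpow_one]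
  field_simp

lemma hasDerivAt_cpow_mul_one_sub_cpow {u : ℝ} (hu : u ∈ Ioo (0 : ℝ) 1) :
    HasDerivAt (fun x : ℝ => (x : ℂ) ^ p * (1 - (x : ℂ)) ^ q)
      (betaDensity p q u * (p - (p + q) * u)) u := by
  have hu₀ : (u : ℂ) ∈ slitPlane := ofReal_mem_slitPlane.2 hu.1
  have hu₁ : 1 - (u : ℂ) ∈ slitPlane := by exact_mod_cast ofReal_mem_slitPlane.2 (sub_pos.2 hu.2)
  have hp := (hasDerivAt_id (u : ℂ)).cpow_const (c := p) hu₀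
  have hq := ((hasDerivAt_id (u : ℂ)).const_sub 1).cpow_const (c := q) hu₁
  refine (hp.fun_mul hq).comp_ofReal.congr_deriv ?_
  simp only [id, betaDensity, cpow_sub _ _ (slitPlane_ne_zero hu₀),
    cpow_sub _ _ (slitPlane_ne_zero hu₁), cpow_one]
  have := slitPlane_ne_zero hu₀
  have := slitPlane_ne_zero hu₁
  field_simp
  ring

lemma continuous_cpow_mul_one_sub_cpow (hp : 0 < p.re) (hq : 0 < q.re) :
    Continuous fun u : ℝ => (u : ℂ) ^ p * (1 - (u : ℂ)) ^ q := by
  have hq' : Continuous fun u : ℝ => ((1 - u : ℝ) : ℂ) ^ q :=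
    (continuous_ofReal_cpow_const hq).comp (by fun_prop)
  simpa using (continuous_ofReal_cpow_const hp).fun_mul hq'

theorem integral_betaDensity_mul_add_deriv_eq_zero (hp : 0 < p.re) (hq : 0 < q.re)
    {g g' : ℝ → ℂ} (hg : ContinuousOn g (Icc 0 1)) (hg' : ContinuousOn g' (Icc 0 1))
    (hderiv : ∀ u ∈ Ioo (0 : ℝ) 1, HasDerivAt g (g' u) u) :
    ∫ u in (0 : ℝ)..1,
      betaDensity p q u * ((p - (p + q) * u) * g u + u * (1 - u) * g' u) = 0 := by
  have hp₀ : p ≠ 0 := fun h => by simp [h] at hp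
  have hq₀ : q ≠ 0 := fun h => by simp [h] at hq
  rw [intervalIntegral.integral_eq_sub_of_hasDerivAt_of_le zero_le_one
    ((continuous_cpow_mul_one_sub_cpow hp hq).continuousOn.mul hg) (fun u hu => ?_)
    (intervalIntegrable_betaDensity_mul hp hq (by fun_prop))]
  · simp [hp₀, hq₀]
  · refine ((hasDerivAt_cpow_mul_one_sub_cpow hu).mul (hderiv u hu)).congr_deriv ?_
    rw [cpow_mul_one_sub_cpow_eq_betaDensity_mul hu]
    ring

lemma ne_zero_and_add_one_ne_zero {z : ℂ} (hz : ∀ u ∈ Icc (0 : ℝ) 1, (u : ℂ) + z ≠ 0) :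
    z ≠ 0 ∧ z + 1 ≠ 0 :=
  ⟨by simpa using hz 0 (by simp), by simpa [add_comm] using hz 1 (by simp)⟩

lemma mul_integral_betaDensity_mul_neg_inv_sq (hp : 0 < p.re) (hq : 0 < q.re) {z : ℂ}
    (hz : ∀ u ∈ Icc (0 : ℝ) 1, (u : ℂ) + z ≠ 0) :
    z * (z + 1) * ∫ u in (0 : ℝ)..1, betaDensity p q u * -(((u : ℂ) + z)⁻¹ ^ 2) =
      (p - 1 + (p + q - 2) * z) * stieltjesTransform (betaDensity p q) 0 1 z
        - (p + q - 1) * betaIntegral p q := by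
  have hinv := continuousOn_inv_ofReal_add hz
  have hinvsq : ContinuousOn (fun u : ℝ => -(((u : ℂ) + z)⁻¹ ^ 2)) (Icc 0 1) := (hinv.pow 2).neg
  have hparts := integral_betaDensity_mul_add_deriv_eq_zero hp hq hinv hinvsq
    fun u hu => by
      simpa [div_eq_mul_inv] using
        (((hasDerivAt_id (u : ℂ)).add_const z).fun_inv (hz u (Ioo_subset_Icc_self hu))).comp_ofReal
  have hpartial : EqOn
      (fun u : ℝ => betaDensity p q u *
        ((p - (p + q) * u) * ((u : ℂ) + z)⁻¹ + u * (1 - u) * -(((u : ℂ) + z)⁻¹ ^ 2)))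
      (fun u : ℝ => (p - 1 + (p + q - 2) * z) * (betaDensity p q u / ((u : ℂ) + z))
        - (p + q - 1) * betaDensity p q u
        - z * (z + 1) * (betaDensity p q u * -(((u : ℂ) + z)⁻¹ ^ 2))) (uIcc 0 1) := by
    intro u hu
    have := hz u (uIcc_of_le (zero_le_one' ℝ) ▸ hu)
    field_simp
    ring
  have hint := intervalIntegrable_betaDensity hp hq
  have hint₁ := intervalIntegrable_div_ofReal_add (z := z) hint
    (by rwa [uIcc_of_le zero_le_one])
  have hint₂ := intervalIntegrable_betaDensity_mul hp hq hinvsq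
  rw [intervalIntegral.integral_congr hpartial, intervalIntegral.integral_sub
    ((hint₁.const_mul _).sub (hint.const_mul _)) (hint₂.const_mul _),
    intervalIntegral.integral_sub (hint₁.const_mul _) (hint.const_mul _)] at hparts
  simp only [intervalIntegral.integral_const_mul] at hparts
  exact (sub_eq_zero.1 hparts).symm

theorem hasDerivAt_stieltjesTransform_betaDensity (hp : 0 < p.re) (hq : 0 < q.re) {z : ℂ}
    (hz : ∀ u ∈ Icc (0 : ℝ) 1, (u : ℂ) + z ≠ 0) :
    HasDerivAt (stieltjesTransform (betaDensity p q) 0 1)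
      (((p - 1 + (p + q - 2) * z) * stieltjesTransform (betaDensity p q) 0 1 z
        - (p + q - 1) * betaIntegral p q) / (z * (z + 1))) z := by
  obtain ⟨hz₀, hz₁⟩ := ne_zero_and_add_one_ne_zero hz
  rw [← mul_integral_betaDensity_mul_neg_inv_sq hp hq hz, mul_div_cancel_left₀ _ (by positivity)]
  exact hasDerivAt_stieltjesTransform (intervalIntegrable_betaDensity hp hq)
    (by rwa [uIcc_of_le zero_le_one])

end BetaDensity

section OneAddInvCpow

variable {z : ℂ}

lemma one_add_inv_mem_slitPlane (hz : ∀ u ∈ Icc (0 : ℝ) 1, (u : ℂ) + z ≠ 0) :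
    1 + z⁻¹ ∈ slitPlane := by
  by_contra h
  obtain ⟨hre, him⟩ : (1 + z⁻¹).re ≤ 0 ∧ (1 + z⁻¹).im = 0 := by
    simpa only [mem_slitPlane_iff, not_or, not_lt, not_not] using h
  set r : ℝ := (z⁻¹).re
  have hr : r ≤ -1 := by
    rw [add_re, one_re] at hre
    linarith
  have hzr : z = ((r⁻¹ : ℝ) : ℂ) := by
    rw [ofReal_inv, ← inv_eq_iff_eq_inv]
    exact Complex.ext rfl (by simpa using him)
  refine hz (-r⁻¹) ⟨?_, ?_⟩ (by simp [hzr])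
  · simpa using hr.trans (by norm_num)
  · rw [← inv_neg]
    exact inv_le_one_of_one_le₀ (by linarith)

lemma hasDerivAt_one_add_inv_cpow (c : ℂ) (hz : ∀ u ∈ Icc (0 : ℝ) 1, (u : ℂ) + z ≠ 0) :
    HasDerivAt (fun x : ℂ => (1 + x⁻¹) ^ c) (-c * (1 + z⁻¹) ^ c / (z * (z + 1))) z := by
  obtain ⟨hz₀, hz₁⟩ := ne_zero_and_add_one_ne_zero hz
  have hslit := one_add_inv_mem_slitPlane hz
  refine (((hasDerivAt_inv hz₀).const_add 1).cpow_const (c := c) hslit).congr_deriv ?_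
  have hbase : 1 + z⁻¹ = (z + 1) / z := by field_simp
  rw [cpow_sub _ _ (slitPlane_ne_zero hslit), cpow_one]
  generalize (1 + z⁻¹) ^ c = X
  rw [hbase]
  field_simp

lemma ofReal_add_mul_ne_zero_of_one_le (hz : ∀ u ∈ Icc (0 : ℝ) 1, (u : ℂ) + z ≠ 0) {t : ℝ}
    (ht : 1 ≤ t) : ∀ u ∈ Icc (0 : ℝ) 1, (u : ℂ) + t * z ≠ 0 := by
  intro u hu h
  have ht₀ : (t : ℂ) ≠ 0 := by exact_mod_cast (zero_lt_one.trans_le ht).ne'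
  refine hz (u / t) ⟨div_nonneg hu.1 (by linarith), (div_le_self hu.1 ht).trans hu.2⟩ ?_
  push_cast
  field_simp
  rwa [mul_zero]

theorem eq_one_add_inv_cpow_of_hasDerivAt {f : ℂ → ℂ} {c : ℂ}
    (hf : ∀ x : ℂ, (∀ u ∈ Icc (0 : ℝ) 1, (u : ℂ) + x ≠ 0) →
      HasDerivAt f (-c * f x / (x * (x + 1))) x)
    (hlim : Tendsto f (cobounded ℂ) (𝓝 1)) (hz : ∀ u ∈ Icc (0 : ℝ) 1, (u : ℂ) + z ≠ 0) :
    f z = (1 + z⁻¹) ^ c := by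
  set F : ℂ → ℂ := fun x => f x * (1 + x⁻¹) ^ (-c)
  have hF (t : ℝ) (ht : 1 ≤ t) : HasDerivAt (fun s : ℝ => F (s * z)) 0 t := by
    have htz := ofReal_add_mul_ne_zero_of_one_le hz ht
    have hFx : HasDerivAt F 0 (t * z) :=
      ((hf _ htz).fun_mul (hasDerivAt_one_add_inv_cpow (-c) htz)).congr_deriv (by ring)
    simpa using (hFx.comp (t : ℂ) ((hasDerivAt_id (t : ℂ)).mul_const z)).comp_ofReal
  have hconst (t : ℝ) (ht : 1 ≤ t) : F (t * z) = F z := by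
    simpa using constant_of_has_deriv_right_zero
      (fun s hs => (hF s hs.1).continuousAt.continuousWithinAt)
      (fun s hs => (hF s hs.1).hasDerivWithinAt) t (right_mem_Icc.2 ht)
  have hpow : Tendsto (fun x : ℂ => (1 + x⁻¹) ^ (-c)) (cobounded ℂ) (𝓝 1) := by
    have hbase : Tendsto (fun x : ℂ => 1 + x⁻¹) (cobounded ℂ) (𝓝 1) := by
      simpa using tendsto_inv₀_cobounded.const_add (1 : ℂ)
    simpa using hbase.cpow (tendsto_const_nhds (x := -c)) (by simp)
  have hray : Tendsto (fun t : ℝ => (t : ℂ) * z) atTop (cobounded ℂ) :=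
    (tendsto_mul_right_cobounded (ne_zero_and_add_one_ne_zero hz).1).comp
      (RCLike.tendsto_ofReal_atTop_cobounded ℂ)
  have hFlim : Tendsto F (cobounded ℂ) (𝓝 1) := by simpa using hlim.mul hpow
  have hFz : F z = 1 := tendsto_nhds_unique
    (tendsto_const_nhds.congr' ((eventually_ge_atTop 1).mono fun t ht => (hconst t ht).symm))
    (hFlim.comp hray)
  have hne : (1 + z⁻¹) ^ c ≠ 0 :=
    cpow_ne_zero_iff.2 (Or.inl (slitPlane_ne_zero (one_add_inv_mem_slitPlane hz)))
  rwa [← mul_inv_eq_one₀ hne, ← cpow_neg]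

end OneAddInvCpow

section Representation

theorem sin_div_pi_mul_betaIntegral {α : ℂ} (hα : α.re ∈ Ioo (-1 : ℝ) 1) :
    Complex.sin (α * π) / π * betaIntegral (1 - α) (1 + α) = α := by
  have h₁ : 0 < (1 - α).re := by simpa using hα.2
  have h₂ : 0 < (1 + α).re := by simpa using neg_lt_iff_pos_add'.1 hα.1
  rcases eq_or_ne α 0 with rfl | hα₀
  · simp
  have hbeta : betaIntegral (1 - α) (1 + α) = α * (Complex.Gamma α * Complex.Gamma (1 - α)) := by
    rw [betaIntegral_eq_Gamma_mul_div _ _ h₁ h₂, add_comm 1 α, Complex.Gamma_add_one α hα₀,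
      show 1 - α + (α + 1) = (1 : ℂ) + 1 by ring, Complex.Gamma_add_one 1 one_ne_zero,
      Complex.Gamma_one]
    ring
  have hpi : (π : ℂ) ≠ 0 := ofReal_ne_zero.2 pi_ne_zero
  have hΓ : Complex.Gamma α * Complex.Gamma (1 - α) ≠ 0 := by
    refine mul_ne_zero (fun h => ?_) (Complex.Gamma_ne_zero_of_re_pos h₁)
    apply Complex.Gamma_ne_zero_of_re_pos h₂
    rw [add_comm, Complex.Gamma_add_one α hα₀, h, mul_zero]
  have hsin : Complex.sin (π * α) ≠ 0 := fun h =>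
    hΓ (by rw [Complex.Gamma_mul_Gamma_one_sub, h, div_zero])
  rw [hbeta, Complex.Gamma_mul_Gamma_one_sub, mul_comm α (π : ℂ)]
  field_simp

lemma eqOn_betaDensity_one_sub_one_add (α : ℂ) :
    EqOn (betaDensity (1 - α) (1 + α)) (fun u => ((1 / u - 1 : ℝ) : ℂ) ^ α) (uIoc 0 1) := by
  intro u hu
  rw [uIoc_of_le zero_le_one] at hu
  have hquot : 1 / u - 1 = (1 - u) / u := by
    have := hu.1.ne'
    field_simp
  simp only [hquot, ofReal_div, div_cpow_ofReal_nonneg (sub_nonneg.2 hu.2) hu.1.le, betaDensity,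
    show 1 - α - 1 = -α by ring, add_sub_cancel_left, cpow_neg]
  push_cast
  ring

lemma eqOn_ofReal_one_div_sub_one_rpow (α : ℝ) :
    EqOn (fun u : ℝ => (((1 / u - 1 : ℝ) ^ α : ℝ) : ℂ))
      (fun u => ((1 / u - 1 : ℝ) : ℂ) ^ (α : ℂ)) (uIoc 0 1) := by
  intro u hu
  rw [uIoc_of_le zero_le_one] at hu
  exact ofReal_cpow (sub_nonneg.2 (one_le_one_div hu.1 hu.2)) α

lemma ofReal_add_ne_zero_of_nonneg {z : ℂ} (hz : ¬ (z.im = 0 ∧ z.re ≤ 0)) {u : ℝ} (hu : 0 ≤ u) :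
    (u : ℂ) + z ≠ 0 := fun h =>
  hz (by simp [eq_neg_of_add_eq_zero_right h, hu])

theorem h_alpha_integral_representation_complex_general {α z : ℂ}
    (hα : α.re ∈ Ioo (-1 : ℝ) 1) (hz : ∀ u ∈ Icc (0 : ℝ) 1, (u : ℂ) + z ≠ 0) :
    (1 + 1 / z) ^ α =
      1 + Complex.sin (α * π) / π *
        ∫ u in (0 : ℝ)..1, ((1 / u - 1 : ℝ) : ℂ) ^ α / ((u : ℂ) + z) := by
  have hp : 0 < (1 - α).re := by simpa using hα.2
  have hq : 0 < (1 + α).re := by simpa using neg_lt_iff_pos_add'.1 hα.1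
  set S := stieltjesTransform (betaDensity (1 - α) (1 + α)) 0 1
  set f : ℂ → ℂ := fun x => 1 + Complex.sin (α * π) / π * S x
  have hf (x : ℂ) (hx : ∀ u ∈ Icc (0 : ℝ) 1, (u : ℂ) + x ≠ 0) :
      HasDerivAt f (-α * f x / (x * (x + 1))) x := by
    refine (((hasDerivAt_stieltjesTransform_betaDensity hp hq hx).const_mul _).const_add
      1).congr_deriv ?_
    linear_combination -(sin_div_pi_mul_betaIntegral hα) / (x * (x + 1))
  have hlim : Tendsto f (cobounded ℂ) (𝓝 1) := by
    simpa using ((tendsto_stieltjesTransform_cobounded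
      (intervalIntegrable_betaDensity hp hq)).const_mul (Complex.sin (α * π) / π)).const_add 1
  rw [one_div, ← eq_one_add_inv_cpow_of_hasDerivAt hf hlim hz]
  simp only [f, S, stieltjesTransform_congr (eqOn_betaDensity_one_sub_one_add α),
    stieltjesTransform]

end Representation

end

theorem h_alpha_integral_representation_complex
    (α : ℝ) (hα : α ∈ Set.Ioo (-1 : ℝ) 1)
    (z : ℂ) (hz : ¬ (z.im = 0 ∧ z.re ≤ 0)) :
    (1 + 1 / z) ^ (α : ℂ) =
      1 + (Real.sin (α * π) / π : ℝ) *
        ∫ u in (0 : ℝ)..1, (((1 / u - 1 : ℝ) ^ α : ℝ) : ℂ) / ((u : ℂ) + z) := by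
  have hweight := congrFun (stieltjesTransform_congr (eqOn_ofReal_one_div_sub_one_rpow α)) z
  rw [stieltjesTransform, stieltjesTransform] at hweight
  rw [hweight, h_alpha_integral_representation_complex_general (α := α) hα
    fun u hu => ofReal_add_ne_zero_of_nonneg hz hu.1]
  push_cast
  rfl
end

section
/- For λ ∈ (0, 1) and every s > 0, the quantity F(λ, s) = ∫₀¹ (1/u − 1)^λ · (1 − λ/(1−u)) · e^{−us} du is strictly positive. -/
open Real

/-!
The factor multiplying the exponential is the derivative of `u ^ (1 - λ) * (1 - u) ^ λ`, which is
positive on `(0, 1)` and vanishes at both endpoints. Integrating by parts therefore moves the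
derivative onto the strictly decreasing factor `exp (-u * s)` without producing a boundary term,
and what remains is the integral of a positive function.
-/

open Set MeasureTheory

theorem integral_deriv_mul_pos_of_deriv_neg {a b : ℝ} {f f' φ φ' : ℝ → ℝ} (hab : a < b)
    (hf : ContinuousOn f (Icc a b)) (hff' : ∀ x ∈ Ioo a b, HasDerivAt f (f' x) x)
    (hf' : IntervalIntegrable f' volume a b) (hfa : f a = 0) (hfb : f b = 0)
    (hf_pos : ∀ x ∈ Ioo a b, 0 < f x) (hφ : ContinuousOn φ (Icc a b))
    (hφφ' : ∀ x ∈ Ioo a b, HasDerivAt φ (φ' x) x) (hφ'_neg : ∀ x ∈ Ioo a b, φ' x < 0) :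
    0 < ∫ x in a..b, f' x * φ x := by
  rw [← uIcc_of_le hab.le] at hf hφ
  have hIoo : Ioo (min a b) (max a b) = Ioo a b := by rw [min_eq_left hab.le, max_eq_right hab.le]
  have hφ' : IntervalIntegrable (fun x ↦ -φ' x) volume a b :=
    intervalIntegral.intervalIntegrable_deriv_of_nonneg hφ.neg
      (hIoo ▸ fun x hx ↦ (hφφ' x hx).neg) (hIoo ▸ fun x hx ↦ (neg_pos.2 (hφ'_neg x hx)).le)
  have by_parts : ∫ x in a..b, f x * -φ' x = ∫ x in a..b, f' x * φ x := by
    simpa [hfa, hfb] using intervalIntegral.integral_mul_deriv_eq_deriv_mul_of_hasDerivAt hf hφ.neg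
      (hIoo ▸ hff') (hIoo ▸ fun x hx ↦ (hφφ' x hx).neg) hf' hφ'
  rw [← by_parts]
  exact intervalIntegral.intervalIntegral_pos_of_pos_on (hφ'.continuousOn_mul hf)
    (fun x hx ↦ mul_pos (hf_pos x hx) (neg_pos.2 (hφ'_neg x hx))) hab

/-- The integrand `u ^ a * (1 - u) ^ b` of the Euler beta integral `B(a + 1, b + 1)`. The exponents
are not shifted by one as they are in `Complex.betaIntegral`, so that `a` and `b` are the orders of
vanishing at `0` and `1`. -/
noncomputable def betaKernel (a b u : ℝ) : ℝ :=
  u ^ a * (1 - u) ^ b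

section betaKernel

variable {a b u : ℝ}

theorem betaKernel_pos (hu : u ∈ Ioo 0 1) : 0 < betaKernel a b u :=
  mul_pos (rpow_pos_of_pos hu.1 a) (rpow_pos_of_pos (sub_pos.2 hu.2) b)

theorem betaKernel_zero_right (ha : a ≠ 0) : betaKernel a b 0 = 0 := by
  rw [betaKernel, zero_rpow ha, zero_mul]

theorem betaKernel_one_right (hb : b ≠ 0) : betaKernel a b 1 = 0 := by
  rw [betaKernel, sub_self, zero_rpow hb, mul_zero]

theorem continuous_betaKernel (ha : 0 ≤ a) (hb : 0 ≤ b) : Continuous (betaKernel a b) :=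
  (continuous_id.rpow_const fun _ ↦ Or.inr ha).mul
    ((continuous_const.sub continuous_id).rpow_const fun _ ↦ Or.inr hb)

theorem hasDerivAt_betaKernel (hu : u ∈ Ioo 0 1) :
    HasDerivAt (betaKernel a b) (betaKernel (a - 1) (b - 1) u * (a * (1 - u) - b * u)) u := by
  have hu₀ : u ≠ 0 := hu.1.ne'
  have hu₁ : 1 - u ≠ 0 := (sub_pos.2 hu.2).ne'
  have hleft := (hasDerivAt_id u).rpow_const (p := a) (Or.inl hu₀)
  have hright := ((hasDerivAt_id u).const_sub 1).rpow_const (p := b) (Or.inl hu₁)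
  refine (hleft.mul hright).congr_deriv ?_
  simp only [id, betaKernel, rpow_sub_one hu₀, rpow_sub_one hu₁]
  field_simp
  ring

theorem intervalIntegrable_betaKernel (ha : -1 < a) (hb : -1 < b) :
    IntervalIntegrable (betaKernel a b) volume 0 1 := by
  have hconv := Complex.betaIntegral_convergent (u := (a + 1 : ℝ)) (v := (b + 1 : ℝ))
    (by rw [Complex.ofReal_re]; linarith) (by rw [Complex.ofReal_re]; linarith)
  refine hconv.norm.congr_uIoo fun u hu ↦ ?_
  rw [uIoo_of_le zero_le_one] at hu
  have hcast : 1 - (u : ℂ) = (1 - u : ℝ) := by push_cast; rfl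
  simp only [norm_mul, hcast, Complex.norm_cpow_eq_rpow_re_of_pos hu.1,
    Complex.norm_cpow_eq_rpow_re_of_pos (sub_pos.2 hu.2), Complex.sub_re, Complex.ofReal_re,
    Complex.one_re, add_sub_cancel_right, betaKernel]

theorem intervalIntegrable_deriv_betaKernel (ha : 0 < a) (hb : 0 < b) :
    IntervalIntegrable (fun u ↦ betaKernel (a - 1) (b - 1) u * (a * (1 - u) - b * u))
      volume 0 1 :=
  (intervalIntegrable_betaKernel (by linarith) (by linarith)).mul_continuousOn (by fun_prop)

theorem one_div_sub_one_rpow_mul_eq_betaKernel (c : ℝ) (hu : u ∈ Ioo 0 1) :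
    (1 / u - 1) ^ c * (1 - c / (1 - u)) =
      betaKernel (1 - c - 1) (c - 1) u * ((1 - c) * (1 - u) - c * u) := by
  have hu₀ : 0 < u := hu.1
  have hu₁ : 0 < 1 - u := sub_pos.2 hu.2
  have hbase : 1 / u - 1 = (1 - u) / u := by field_simp
  rw [betaKernel, hbase, div_rpow hu₁.le hu₀.le, rpow_sub_one hu₁.ne', sub_sub_cancel_left,
    rpow_neg hu₀.le]
  field_simp
  ring

end betaKernel

theorem hasDerivAt_exp_neg_mul (s u : ℝ) :
    HasDerivAt (fun u ↦ exp (-u * s)) (-(s * exp (-u * s))) u :=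
  ((hasDerivAt_neg' u).mul_const s).exp.congr_deriv (by ring)

theorem F_pos
    (lam : ℝ) (hlam : lam ∈ Set.Ioo (0 : ℝ) 1) (s : ℝ) (hs : 0 < s) :
    0 < ∫ u in (0 : ℝ)..1,
        (1 / u - 1) ^ lam * (1 - lam / (1 - u)) * Real.exp (-u * s) := by
  obtain ⟨hlam₀, hlam₁⟩ := hlam
  have hlam₁' : 0 < 1 - lam := sub_pos.2 hlam₁
  rw [intervalIntegral.integral_congr_Ioo_of_le zero_le_one fun u hu ↦
    congrArg (· * exp (-u * s)) (one_div_sub_one_rpow_mul_eq_betaKernel lam hu)]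
  exact integral_deriv_mul_pos_of_deriv_neg zero_lt_one
    (continuous_betaKernel hlam₁'.le hlam₀.le).continuousOn
    (fun _ hu ↦ hasDerivAt_betaKernel hu)
    (intervalIntegrable_deriv_betaKernel hlam₁' hlam₀)
    (betaKernel_zero_right hlam₁'.ne')
    (betaKernel_one_right hlam₀.ne')
    (fun _ hu ↦ betaKernel_pos hu)
    (by fun_prop)
    (fun u _ ↦ hasDerivAt_exp_neg_mul s u)
    (fun u _ ↦ neg_neg_of_pos (mul_pos hs (exp_pos _)))
end

section
/- For λ ∈ (0, 1), the integral ∫₀¹ (1/u − 1)^λ · (1 − λ/(1−u)) du equals 0. -/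
open Real

/-!
On `(0, 1)` the integrand is the difference of two beta kernels,
`u ^ (-λ) * (1 - u) ^ λ - λ * (u ^ (-λ) * (1 - u) ^ (λ - 1))`, both integrable for `0 < λ < 1`.
The integral is therefore `Β(1 - λ, λ + 1) - λ * Β(1 - λ, λ)`, which vanishes by the recurrence
`(a + b) * Β(a, b + 1) = b * Β(a, b)`, since here `a + b = 1`.
-/

theorem add_mul_betaIntegral_add_one_right {a b : ℂ} (ha : 0 < a.re) (hb : 0 < b.re) :
    (a + b) * a.betaIntegral (b + 1) = b * a.betaIntegral b := by
  have hab : 0 < (a + b).re := by simpa using add_pos ha hb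
  have hb_add : 0 < (b + 1).re := by simpa using add_pos hb one_pos
  have hb_ne : b ≠ 0 := Complex.ne_zero_of_re_pos hb
  have hab_ne : a + b ≠ 0 := Complex.ne_zero_of_re_pos hab
  refine mul_left_cancel₀ (Complex.Gamma_ne_zero_of_re_pos hab) ?_
  calc
    (a + b).Gamma * ((a + b) * a.betaIntegral (b + 1))
    _ = (a + (b + 1)).Gamma * a.betaIntegral (b + 1) := by
      rw [← add_assoc, Complex.Gamma_add_one _ hab_ne]
      ring
    _ = a.Gamma * (b * b.Gamma) := by
      rw [← Complex.Gamma_mul_Gamma_eq_betaIntegral ha hb_add, Complex.Gamma_add_one _ hb_ne]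
    _ = (a + b).Gamma * (b * a.betaIntegral b) := by
      linear_combination b * Complex.Gamma_mul_Gamma_eq_betaIntegral ha hb

theorem one_div_sub_one_cpow {u : ℝ} (hu₀ : 0 < u) (hu₁ : u ≤ 1) (s : ℂ) :
    (1 / (u : ℂ) - 1) ^ s = (u : ℂ) ^ (-s) * (1 - (u : ℂ)) ^ s := by
  have hu : (u : ℂ) ≠ 0 := mod_cast hu₀.ne'
  have h_div : 1 / (u : ℂ) - 1 = ((1 - u : ℝ) : ℂ) / u := by
    push_cast
    field_simp
  rw [h_div, Complex.div_cpow_ofReal_nonneg (sub_nonneg.2 hu₁) hu₀.le, Complex.cpow_neg,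
    div_eq_inv_mul, Complex.ofReal_sub, Complex.ofReal_one]

theorem one_div_sub_one_cpow_mul_eq_sub {u : ℝ} (hu : u ∈ Set.Ioo 0 1) (s c : ℂ) :
    (1 / (u : ℂ) - 1) ^ s * (1 - c / (1 - u)) =
      (u : ℂ) ^ (1 - s - 1) * (1 - (u : ℂ)) ^ (s + 1 - 1) -
        c * ((u : ℂ) ^ (1 - s - 1) * (1 - (u : ℂ)) ^ (s - 1)) := by
  have hu_ne : 1 - (u : ℂ) ≠ 0 := mod_cast (sub_pos.2 hu.2).ne'
  rw [one_div_sub_one_cpow hu.1 hu.2.le, Complex.cpow_sub s 1 hu_ne, Complex.cpow_one,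
    add_sub_cancel_right, sub_sub_cancel_left]
  ring

theorem integral_one_div_sub_one_cpow_mul {s : ℂ} (hs : s.re ∈ Set.Ioo 0 1) (c : ℂ) :
    ∫ u in (0 : ℝ)..1, (1 / (u : ℂ) - 1) ^ s * (1 - c / (1 - u)) =
      (s - c) * (1 - s).betaIntegral s := by
  have h_one_sub : 0 < (1 - s).re := by simpa using hs.2
  have h_add_one : 0 < (s + 1).re := by simpa using add_pos hs.1 one_pos
  calc
    ∫ u in (0 : ℝ)..1, (1 / (u : ℂ) - 1) ^ s * (1 - c / (1 - u))
    _ = (1 - s).betaIntegral (s + 1) - c * (1 - s).betaIntegral s := by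
      rw [intervalIntegral.integral_congr_Ioo_of_le zero_le_one
          fun u hu => one_div_sub_one_cpow_mul_eq_sub hu s c,
        intervalIntegral.integral_sub (Complex.betaIntegral_convergent h_one_sub h_add_one)
          ((Complex.betaIntegral_convergent h_one_sub hs.1).const_mul c),
        intervalIntegral.integral_const_mul, Complex.betaIntegral, Complex.betaIntegral]
    _ = (s - c) * (1 - s).betaIntegral s := by
      have h_rec := add_mul_betaIntegral_add_one_right h_one_sub hs.1
      rw [sub_add_cancel, one_mul] at h_rec
      rw [h_rec, sub_mul]

theorem ofReal_integral_one_div_sub_one_rpow_mul (r c : ℝ) :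
    ((∫ u in (0 : ℝ)..1, (1 / u - 1) ^ r * (1 - c / (1 - u)) : ℝ) : ℂ) =
      ∫ u in (0 : ℝ)..1, (1 / (u : ℂ) - 1) ^ (r : ℂ) * (1 - c / (1 - u)) := by
  rw [← intervalIntegral.integral_ofReal]
  refine intervalIntegral.integral_congr_Ioo_of_le zero_le_one fun u hu => ?_
  have h_nonneg : 0 ≤ 1 / u - 1 := sub_nonneg.2 (one_le_one_div hu.1 hu.2.le)
  simp only [Complex.ofReal_mul, Complex.ofReal_cpow h_nonneg, Complex.ofReal_sub,
    Complex.ofReal_div, Complex.ofReal_one]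

theorem F_integral_zero_general {s : ℂ} (hs : s.re ∈ Set.Ioo 0 1) :
    ∫ u in (0 : ℝ)..1, (1 / (u : ℂ) - 1) ^ s * (1 - s / (1 - u)) = 0 := by
  rw [integral_one_div_sub_one_cpow_mul hs, sub_self, zero_mul]

theorem F_integral_zero
    (lam : ℝ) (hlam : lam ∈ Set.Ioo (0 : ℝ) 1) :
    ∫ u in (0 : ℝ)..1, (1 / u - 1) ^ lam * (1 - lam / (1 - u)) = 0 :=
  Complex.ofReal_eq_zero.1 <|
    (ofReal_integral_one_div_sub_one_rpow_mul lam lam).trans (F_integral_zero_general hlam)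
end

section
/- Let x > y > 0. Then for every real t > −y, the logarithmic mean admits the integral representation L_{x,y}(t) = L(x,y) + t + ((x−y)/π) · ∫₀^∞ (P_{x,y}(s)/s) · e^{−sy} · (1 − e^{−st}) ds, where P_{x,y}(s) = ∫₀¹ sin(λπ) · F(λ, (x−y)s) dλ and F(λ,s) = ∫₀¹ (1/u − 1)^λ (1 − λ/(1−u)) e^{−us} du. -/
open Real MeasureTheory

/-- The function `F(λ, s)` from the paper. -/
noncomputable def paperF (lam s : ℝ) : ℝ :=
  ∫ u in (0 : ℝ)..1, (1 / u - 1) ^ lam * (1 - lam / (1 - u)) * Real.exp (-u * s)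

/-- The function `P_{x,y}(s)` from the paper. -/
noncomputable def paperP (x y s : ℝ) : ℝ :=
  ∫ lam in (0 : ℝ)..1, Real.sin (lam * π) * paperF lam ((x - y) * s)

open Set

/-!
On `(0, 1)` the factor `(1 / u - 1) ^ θ * (1 - θ / (1 - u))` is the derivative of
`(1 - u) ^ θ * u ^ (1 - θ)`, so integrating by parts turns `paperP x y s / s * exp (-s * y)` into
`x - y` times the integral of `exp (-s * (x * u + y * (1 - u)))` over the unit square against the
weight `sin (θ * π) * (1 - u) ^ θ * u ^ (1 - θ)`. Integrating over `s` first leaves the weight over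
`x * u + y * (1 - u)`; its `u`-integral is, by Feynman's parametrization and Euler's reflection
formula, a multiple of the gap `θ * x + (1 - θ) * y - x ^ θ * y ^ (1 - θ)`, and the `θ`-integral of
the geometric mean is the logarithmic mean. Hence
`L(x, y) = (x + y) / 2 - (x - y) / π * ∫ paperP x y s / s * exp (-s * y)`. As `paperP` only depends
on `x - y`, subtracting this identity at `(x, y)` from the one at `(x + t, y + t)` gives the result.
-/

section Beta

variable {a b : ℝ}

theorem ofReal_rpow_mul_one_sub_rpow {u : ℝ} (hu : u ∈ Icc 0 1) (a b : ℝ) :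
    ((u ^ (a - 1) * (1 - u) ^ (b - 1) : ℝ) : ℂ) =
      (u : ℂ) ^ ((a : ℂ) - 1) * (1 - (u : ℂ)) ^ ((b : ℂ) - 1) := by
  rw [Complex.ofReal_mul, Complex.ofReal_cpow hu.1, Complex.ofReal_cpow (sub_nonneg.2 hu.2)]
  push_cast
  rfl

theorem intervalIntegrable_rpow_mul_one_sub_rpow (ha : 0 < a) (hb : 0 < b) :
    IntervalIntegrable (fun u : ℝ => u ^ (a - 1) * (1 - u) ^ (b - 1)) volume 0 1 := by
  have hconv : IntervalIntegrable
      (fun u : ℝ => (u : ℂ) ^ ((a : ℂ) - 1) * (1 - (u : ℂ)) ^ ((b : ℂ) - 1)) volume 0 1 :=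
    Complex.betaIntegral_convergent ha hb
  rw [intervalIntegrable_iff_integrableOn_Icc_of_le zero_le_one] at hconv ⊢
  refine IntegrableOn.congr_fun hconv.re (fun u hu => ?_) measurableSet_Icc
  simp only [← ofReal_rpow_mul_one_sub_rpow hu, RCLike.re_eq_complex_re, Complex.ofReal_re]

theorem integral_rpow_mul_one_sub_rpow (ha : 0 < a) (hb : 0 < b) :
    ∫ u in (0 : ℝ)..1, u ^ (a - 1) * (1 - u) ^ (b - 1) = ProbabilityTheory.beta a b := by
  have hcast : Complex.betaIntegral a b =
      ((∫ u in (0 : ℝ)..1, u ^ (a - 1) * (1 - u) ^ (b - 1) : ℝ) : ℂ) := by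
    rw [Complex.betaIntegral, ← intervalIntegral.integral_ofReal]
    exact intervalIntegral.integral_congr_Ioo_of_le zero_le_one fun u hu =>
      (ofReal_rpow_mul_one_sub_rpow (Ioo_subset_Icc_self hu) a b).symm
  rw [ProbabilityTheory.beta_eq_betaIntegralReal a b ha hb, hcast, Complex.ofReal_re]

theorem beta_add_one_left (ha : a ≠ 0) (hab : a + b ≠ 0) :
    ProbabilityTheory.beta (a + 1) b = a / (a + b) * ProbabilityTheory.beta a b := by
  rw [ProbabilityTheory.beta, ProbabilityTheory.beta, add_right_comm, Gamma_add_one ha,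
    Gamma_add_one hab, mul_assoc, mul_div_mul_comm]

theorem beta_one_sub_self (b : ℝ) :
    ProbabilityTheory.beta (1 - b) b = π / Real.sin (b * π) := by
  rw [ProbabilityTheory.beta, sub_add_cancel, Gamma_one, div_one, mul_comm,
    Gamma_mul_Gamma_one_sub, mul_comm b]

end Beta

section Feynman

variable {x y : ℝ}

/-- The Möbius self-map of the unit interval that multiplies the odds `u / (1 - u)` by `x / y`;
it is the substitution behind Feynman's parametrization. -/
noncomputable def scaleOdds (x y u : ℝ) : ℝ :=
  x * u / (x * u + y * (1 - u))

theorem interpolation_pos (hx : 0 < x) (hy : 0 < y) {u : ℝ} (hu : u ∈ Icc 0 1) :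
    0 < x * u + y * (1 - u) := by
  rcases hu.1.eq_or_lt with rfl | hu0
  · simpa using hy
  · exact add_pos_of_pos_of_nonneg (mul_pos hx hu0) (mul_nonneg hy.le (sub_nonneg.2 hu.2))

theorem one_sub_scaleOdds (hx : 0 < x) (hy : 0 < y) {u : ℝ} (hu : u ∈ Icc 0 1) :
    1 - scaleOdds x y u = y * (1 - u) / (x * u + y * (1 - u)) := by
  rw [scaleOdds, one_sub_div (interpolation_pos hx hy hu).ne', add_sub_cancel_left]

theorem mapsTo_scaleOdds (hx : 0 < x) (hy : 0 < y) :
    MapsTo (scaleOdds x y) (Ioo 0 1) (Ioo 0 1) := by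
  intro u hu
  have hu' := Ioo_subset_Icc_self hu
  have hpos := interpolation_pos hx hy hu'
  refine ⟨div_pos (mul_pos hx hu.1) hpos, sub_pos.1 ?_⟩
  rw [one_sub_scaleOdds hx hy hu']
  exact div_pos (mul_pos hy (sub_pos.2 hu.2)) hpos

theorem leftInvOn_scaleOdds (hx : 0 < x) (hy : 0 < y) :
    LeftInvOn (scaleOdds y x) (scaleOdds x y) (Icc 0 1) := by
  intro u hu
  have hpos := interpolation_pos hx hy hu
  rw [scaleOdds, one_sub_scaleOdds hx hy hu, scaleOdds]
  field_simp
  ring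

theorem bijOn_scaleOdds (hx : 0 < x) (hy : 0 < y) :
    BijOn (scaleOdds x y) (Ioo 0 1) (Ioo 0 1) :=
  InvOn.bijOn ⟨(leftInvOn_scaleOdds hx hy).mono Ioo_subset_Icc_self,
    (leftInvOn_scaleOdds hy hx).mono Ioo_subset_Icc_self⟩
    (mapsTo_scaleOdds hx hy) (mapsTo_scaleOdds hy hx)

theorem hasDerivAt_scaleOdds (hx : 0 < x) (hy : 0 < y) {u : ℝ} (hu : u ∈ Icc 0 1) :
    HasDerivAt (scaleOdds x y) (x * y / (x * u + y * (1 - u)) ^ 2) u := by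
  have hnum : HasDerivAt (fun u => x * u) x u := by
    simpa using (hasDerivAt_id u).const_mul x
  have hden : HasDerivAt (fun u => x * u + y * (1 - u)) (x + y * -1) u :=
    hnum.add (((hasDerivAt_id u).const_sub 1).const_mul y)
  refine (hnum.div hden (interpolation_pos hx hy hu).ne').congr_deriv ?_
  ring

theorem integral_rpow_mul_one_sub_rpow_div_interpolation_rpow (hx : 0 < x) (hy : 0 < y)
    (a b : ℝ) :
    ∫ u in (0 : ℝ)..1, u ^ (a - 1) * (1 - u) ^ (b - 1) / (x * u + y * (1 - u)) ^ (a + b) =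
      (∫ u in (0 : ℝ)..1, u ^ (a - 1) * (1 - u) ^ (b - 1)) / (x ^ a * y ^ b) := by
  rw [eq_div_iff (by positivity), ← intervalIntegral.integral_mul_const]
  simp only [intervalIntegral.integral_of_le zero_le_one, integral_Ioc_eq_integral_Ioo]
  have hsubst := integral_image_eq_integral_abs_deriv_smul measurableSet_Ioo
    (fun u hu => (hasDerivAt_scaleOdds hx hy (Ioo_subset_Icc_self hu)).hasDerivWithinAt)
    (bijOn_scaleOdds hx hy).injOn (fun v => v ^ (a - 1) * (1 - v) ^ (b - 1))
  rw [(bijOn_scaleOdds hx hy).image_eq] at hsubst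
  rw [hsubst]
  refine setIntegral_congr_fun measurableSet_Ioo fun u hu => ?_
  have hpos := interpolation_pos hx hy (Ioo_subset_Icc_self hu)
  have hu1 : 0 < 1 - u := sub_pos.2 hu.2
  simp only [smul_eq_mul]
  rw [one_sub_scaleOdds hx hy (Ioo_subset_Icc_self hu), scaleOdds, abs_of_pos (by positivity),
    div_rpow (mul_pos hx hu.1).le hpos.le, div_rpow (mul_pos hy hu1).le hpos.le,
    mul_rpow hx.le hu.1.le, mul_rpow hy.le hu1.le, rpow_add hpos, rpow_sub_one hx.ne',
    rpow_sub_one hy.ne', rpow_sub_one hpos.ne', rpow_sub_one hpos.ne']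
  generalize x * u + y * (1 - u) = A at hpos ⊢
  field_simp

theorem integral_rpow_mul_one_sub_rpow_div_interpolation (hx : 0 < x) (hy : 0 < y) {θ : ℝ}
    (hθ : θ ∈ Ioo 0 1) :
    ∫ u in (0 : ℝ)..1, u ^ (1 - θ - 1) * (1 - u) ^ (θ - 1) / (x * u + y * (1 - u)) =
      π / Real.sin (θ * π) / (x ^ (1 - θ) * y ^ θ) := by
  have hfeynman := integral_rpow_mul_one_sub_rpow_div_interpolation_rpow hx hy (1 - θ) θ
  simp only [sub_add_cancel, rpow_one] at hfeynman
  rw [hfeynman, integral_rpow_mul_one_sub_rpow (sub_pos.2 hθ.2) hθ.1, beta_one_sub_self]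

theorem sq_sub_mul_rpow_div_interpolation (hx : 0 < x) (hy : 0 < y) (θ : ℝ) {u : ℝ}
    (hu : u ∈ Ioo 0 1) :
    (x - y) ^ 2 * ((1 - u) ^ θ * u ^ (1 - θ) / (x * u + y * (1 - u))) =
      x * (u ^ (1 - θ - 1) * (1 - u) ^ (θ - 1))
        - (x - y) * (u ^ (1 - θ + 1 - 1) * (1 - u) ^ (θ - 1))
        - x * y * (u ^ (1 - θ - 1) * (1 - u) ^ (θ - 1) / (x * u + y * (1 - u))) := by
  have hu0 : u ≠ 0 := hu.1.ne'
  have hu1 : 1 - u ≠ 0 := (sub_pos.2 hu.2).ne'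
  have hpos := interpolation_pos hx hy (Ioo_subset_Icc_self hu)
  simp only [rpow_sub_one hu0, rpow_sub_one hu1, add_sub_cancel_right]
  field_simp
  ring

theorem weighted_arith_mean_sub_geom_mean_eq_integral (hx : 0 < x) (hy : 0 < y) {θ : ℝ}
    (hθ : θ ∈ Ioo 0 1) :
    π * (θ * x + (1 - θ) * y - x ^ θ * y ^ (1 - θ)) =
      (x - y) ^ 2 * (Real.sin (θ * π) *
        ∫ u in (0 : ℝ)..1, (1 - u) ^ θ * u ^ (1 - θ) / (x * u + y * (1 - u))) := by
  have hθ' : 0 < 1 - θ := sub_pos.2 hθ.2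
  have hsin : 0 < Real.sin (θ * π) :=
    sin_pos_of_mem_Ioo ⟨mul_pos hθ.1 pi_pos, mul_lt_of_lt_one_left pi_pos hθ.2⟩
  have hβ := intervalIntegrable_rpow_mul_one_sub_rpow hθ' hθ.1
  have hβu := intervalIntegrable_rpow_mul_one_sub_rpow (add_pos hθ' one_pos) hθ.1
  have hβdiv : IntervalIntegrable (fun u : ℝ =>
      u ^ (1 - θ - 1) * (1 - u) ^ (θ - 1) / (x * u + y * (1 - u))) volume 0 1 := by
    simp only [div_eq_mul_inv]
    refine hβ.mul_continuousOn (ContinuousOn.inv₀ (by fun_prop) fun u hu => ?_)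
    rw [uIcc_of_le zero_le_one] at hu
    exact (interpolation_pos hx hy hu).ne'
  symm
  rw [mul_left_comm, ← intervalIntegral.integral_const_mul,
    intervalIntegral.integral_congr_Ioo_of_le zero_le_one
      fun u hu => sq_sub_mul_rpow_div_interpolation hx hy θ hu,
    intervalIntegral.integral_sub ((hβ.const_mul _).sub (hβu.const_mul _)) (hβdiv.const_mul _),
    intervalIntegral.integral_sub (hβ.const_mul _) (hβu.const_mul _)]
  simp only [intervalIntegral.integral_const_mul]
  rw [integral_rpow_mul_one_sub_rpow_div_interpolation hx hy hθ,
    integral_rpow_mul_one_sub_rpow hθ' hθ.1,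
    integral_rpow_mul_one_sub_rpow (add_pos hθ' one_pos) hθ.1,
    beta_add_one_left hθ'.ne' (by simp), beta_one_sub_self, sub_add_cancel, div_one,
    rpow_sub hx, rpow_sub hy, rpow_one, rpow_one]
  field_simp
  ring

end Feynman

section LaplaceTransform

variable {α : Type*} [MeasurableSpace α] {μ : Measure α} {w A : α → ℝ} {m : ℝ}

theorem integrable_mul_exp_neg_mul_prod (hw : Integrable w μ) (hA : AEMeasurable A μ)
    (hm : 0 < m) (hmA : ∀ᵐ z ∂μ, m ≤ A z) :
    Integrable (fun q : ℝ × α => w q.2 * Real.exp (-q.1 * A q.2))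
      ((volume.restrict (Ioi 0)).prod μ) := by
  have hdom : Integrable (fun q : ℝ × α => Real.exp (-m * q.1) * w q.2)
      ((volume.restrict (Ioi 0)).prod μ) :=
    Integrable.mul_prod (integrableOn_exp_mul_Ioi (neg_lt_zero.2 hm) 0) hw
  refine hdom.mono ?_ ?_
  · have hexp : AEMeasurable (fun q : ℝ × α => Real.exp (-q.1 * A q.2))
        ((volume.restrict (Ioi 0)).prod μ) :=
      (measurable_fst.neg.aemeasurable.mul hA.comp_snd).exp
    exact hw.aestronglyMeasurable.comp_snd.mul hexp.aestronglyMeasurable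
  · have hs : ∀ᵐ q ∂(volume.restrict (Ioi (0 : ℝ))).prod μ, 0 < q.1 :=
      Measure.quasiMeasurePreserving_fst.ae (ae_restrict_mem measurableSet_Ioi)
    filter_upwards [hs, Measure.quasiMeasurePreserving_snd.ae hmA] with q hq hqA
    rw [norm_mul, norm_mul, mul_comm, Real.norm_of_nonneg (exp_pos _).le,
      Real.norm_of_nonneg (exp_pos _).le]
    refine mul_le_mul_of_nonneg_right (exp_le_exp.2 ?_) (norm_nonneg _)
    linarith [mul_le_mul_of_nonneg_left hqA hq.le]

theorem integral_mul_exp_neg_mul_eq_integral_div [SFinite μ] (hw : Integrable w μ)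
    (hA : AEMeasurable A μ) (hm : 0 < m) (hmA : ∀ᵐ z ∂μ, m ≤ A z) :
    ∫ s in Ioi 0, ∫ z, w z * Real.exp (-s * A z) ∂μ = ∫ z, w z / A z ∂μ := by
  rw [integral_integral_swap (integrable_mul_exp_neg_mul_prod hw hA hm hmA)]
  refine integral_congr_ae (hmA.mono fun z hz => ?_)
  have hlaplace : ∫ s in Ioi 0, Real.exp (-s * A z) = (A z)⁻¹ := by
    simpa [mul_comm (A z)] using integral_exp_mul_Ioi (neg_lt_zero.2 (hm.trans_le hz)) 0
  simp only [integral_const_mul, hlaplace, div_eq_mul_inv]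

end LaplaceTransform

section Kernel

/-- The weight on the unit square, at `z = (θ, u)`, whose Laplace transform in `u` gives `paperP`
(`θ` is the paper's `λ`). -/
noncomputable def sinBetaWeight (z : ℝ × ℝ) : ℝ :=
  Real.sin (z.1 * π) * ((1 - z.2) ^ z.1 * z.2 ^ (1 - z.1))

theorem abs_sinBetaWeight_le_one {z : ℝ × ℝ} (hz : z ∈ Icc (0 : ℝ) 1 ×ˢ Icc (0 : ℝ) 1) :
    |sinBetaWeight z| ≤ 1 := by
  obtain ⟨⟨hθ0, hθ1⟩, hu0, hu1⟩ := hz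
  have hu1' : 0 ≤ 1 - z.2 := sub_nonneg.2 hu1
  have hθ1' : 0 ≤ 1 - z.1 := sub_nonneg.2 hθ1
  rw [sinBetaWeight, abs_mul, abs_of_nonneg (a := _ * _) (by positivity)]
  exact mul_le_one₀ (abs_sin_le_one _) (by positivity) <|
    mul_le_one₀ (rpow_le_one hu1' (by linarith) hθ0) (by positivity) (rpow_le_one hu0 hu1 hθ1')

theorem integrableOn_sinBetaWeight :
    IntegrableOn sinBetaWeight (Ioc (0 : ℝ) 1 ×ˢ Ioc (0 : ℝ) 1) := by
  have hmeas : Measurable sinBetaWeight := by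
    unfold sinBetaWeight
    fun_prop
  refine (Measure.integrableOn_of_bounded (M := 1)
    (isCompact_Icc.prod isCompact_Icc).measure_ne_top hmeas.aestronglyMeasurable ?_).mono_set
    (prod_mono Ioc_subset_Icc_self Ioc_subset_Icc_self)
  filter_upwards [ae_restrict_mem (measurableSet_Icc.prod measurableSet_Icc)] with z hz
  exact abs_sinBetaWeight_le_one hz

theorem setIntegral_sinBetaWeight_mul {g : ℝ → ℝ} (hg : ContinuousOn g (Icc 0 1)) :
    ∫ z in Ioc (0 : ℝ) 1 ×ˢ Ioc (0 : ℝ) 1, sinBetaWeight z * g z.2 =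
      ∫ θ in (0 : ℝ)..1, Real.sin (θ * π) *
        ∫ u in (0 : ℝ)..1, (1 - u) ^ θ * u ^ (1 - θ) * g u := by
  have hint : IntegrableOn (fun z => sinBetaWeight z * g z.2)
      (Ioc (0 : ℝ) 1 ×ˢ Ioc (0 : ℝ) 1) :=
    integrableOn_sinBetaWeight.mul_continuousOn_of_subset
      (hg.comp continuousOn_snd fun _ hz => hz.2) (measurableSet_Ioc.prod measurableSet_Ioc)
      (isCompact_Icc.prod isCompact_Icc) (prod_mono Ioc_subset_Icc_self Ioc_subset_Icc_self)
  rw [Measure.volume_eq_prod] at hint ⊢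
  rw [setIntegral_prod _ hint]
  simp only [intervalIntegral.integral_of_le zero_le_one, sinBetaWeight, mul_assoc,
    integral_const_mul]

theorem one_div_sub_one_rpow_mul {u : ℝ} (hu : u ∈ Ioo 0 1) (θ : ℝ) :
    (1 / u - 1) ^ θ * (1 - θ / (1 - u)) =
      u ^ (1 - θ - 1) * (1 - u) ^ (θ - 1) * (1 - u - θ) := by
  have hu0 : 0 < u := hu.1
  have hu1 : 0 < 1 - u := sub_pos.2 hu.2
  rw [div_sub_one hu0.ne', div_rpow hu1.le hu0.le, rpow_sub_one hu1.ne', sub_sub_cancel_left,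
    rpow_neg hu0.le]
  field_simp

theorem hasDerivAt_one_sub_rpow_mul_rpow_one_sub {u : ℝ} (hu : u ∈ Ioo 0 1) (θ : ℝ) :
    HasDerivAt (fun u : ℝ => (1 - u) ^ θ * u ^ (1 - θ))
      ((1 / u - 1) ^ θ * (1 - θ / (1 - u))) u := by
  have hu0 : 0 < u := hu.1
  have hu1 : 0 < 1 - u := sub_pos.2 hu.2
  have hleft := ((hasDerivAt_id u).const_sub 1).rpow_const (p := θ) (Or.inl hu1.ne')
  have hright := hasDerivAt_rpow_const (p := 1 - θ) (Or.inl hu0.ne')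
  refine (hleft.mul hright).congr_deriv ?_
  rw [one_div_sub_one_rpow_mul hu]
  simp only [id, rpow_sub_one hu0.ne', rpow_sub_one hu1.ne']
  field_simp
  ring

theorem intervalIntegrable_one_div_sub_one_rpow_mul {θ : ℝ} (hθ : θ ∈ Ioo 0 1) :
    IntervalIntegrable (fun u : ℝ => (1 / u - 1) ^ θ * (1 - θ / (1 - u))) volume 0 1 := by
  have hβ := (intervalIntegrable_rpow_mul_one_sub_rpow (sub_pos.2 hθ.2) hθ.1).mul_continuousOn
    (g := fun u => 1 - u - θ) (by fun_prop)
  rw [intervalIntegrable_iff_integrableOn_Ioo_of_le zero_le_one] at hβ ⊢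
  exact hβ.congr_fun (fun u hu => (one_div_sub_one_rpow_mul hu θ).symm) measurableSet_Ioo

theorem paperF_eq_mul_integral {θ : ℝ} (hθ : θ ∈ Ioo 0 1) (s : ℝ) :
    paperF θ s =
      s * ∫ u in (0 : ℝ)..1, (1 - u) ^ θ * u ^ (1 - θ) * Real.exp (-u * s) := by
  have hcont : Continuous fun u : ℝ => (1 - u) ^ θ * u ^ (1 - θ) :=
    ((continuous_const.sub continuous_id).rpow_const fun _ => Or.inr hθ.1.le).mul
      (continuous_id.rpow_const fun _ => Or.inr (sub_nonneg.2 hθ.2.le))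
  have hexp (u : ℝ) : HasDerivAt (fun u => Real.exp (-u * s)) (Real.exp (-u * s) * (-1 * s)) u :=
    ((hasDerivAt_neg u).mul_const s).exp
  have hparts := intervalIntegral.integral_mul_deriv_eq_deriv_mul_of_hasDerivAt
    (a := 0) (b := 1) (by fun_prop) hcont.continuousOn (fun u _ => hexp u)
    (fun u hu => hasDerivAt_one_sub_rpow_mul_rpow_one_sub (by simpa using hu) θ)
    (Continuous.intervalIntegrable (by fun_prop) _ _)
    (intervalIntegrable_one_div_sub_one_rpow_mul hθ)
  rw [paperF]
  simp only [mul_comm _ (Real.exp _)]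
  rw [hparts]
  simp only [sub_self, zero_rpow hθ.1.ne', zero_rpow (sub_pos.2 hθ.2).ne', zero_mul, mul_zero,
    zero_sub, ← intervalIntegral.integral_neg, ← intervalIntegral.integral_const_mul]
  congr with u
  ring

theorem paperP_eq_mul_setIntegral (x y s : ℝ) :
    paperP x y s = (x - y) * s * ∫ z in Ioc (0 : ℝ) 1 ×ˢ Ioc (0 : ℝ) 1,
      sinBetaWeight z * Real.exp (-z.2 * ((x - y) * s)) := by
  rw [setIntegral_sinBetaWeight_mul (g := fun u => Real.exp (-u * ((x - y) * s))) (by fun_prop),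
    ← intervalIntegral.integral_const_mul, paperP]
  refine intervalIntegral.integral_congr_Ioo_of_le zero_le_one fun θ hθ => ?_
  simp only [paperF_eq_mul_integral hθ, mul_left_comm]

theorem paperP_div_mul_exp {s : ℝ} (hs : s ≠ 0) (x y : ℝ) :
    paperP x y s / s * Real.exp (-s * y) =
      (x - y) * ∫ z in Ioc (0 : ℝ) 1 ×ˢ Ioc (0 : ℝ) 1,
        sinBetaWeight z * Real.exp (-s * (x * z.2 + y * (1 - z.2))) := by
  rw [paperP_eq_mul_setIntegral, mul_right_comm, mul_div_cancel_right₀ _ hs, mul_assoc,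
    ← integral_mul_const]
  simp only [mul_assoc, ← exp_add]
  congr with z
  ring_nf

end Kernel

section LogMean

/-- The logarithmic mean `L(x, y)` of two distinct positive reals; at `x = y` it takes the junk
value `0`. -/
noncomputable def logMean (x y : ℝ) : ℝ :=
  (x - y) / (Real.log x - Real.log y)

variable {x y : ℝ}

theorem continuous_rpow_mul_rpow_one_sub (hx : x ≠ 0) (hy : y ≠ 0) :
    Continuous fun θ : ℝ => x ^ θ * y ^ (1 - θ) :=
  (continuous_const_rpow hx).mul ((continuous_const_rpow hy).comp (by fun_prop))

theorem integral_rpow_mul_rpow_one_sub (hx : 0 < x) (hy : 0 < y) (hxy : x ≠ y) :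
    ∫ θ in (0 : ℝ)..1, x ^ θ * y ^ (1 - θ) = logMean x y := by
  have hlog : Real.log x - Real.log y ≠ 0 :=
    sub_ne_zero.2 fun h => hxy (log_injOn_pos hx hy h)
  have hexp (θ : ℝ) : x ^ θ * y ^ (1 - θ) = y * Real.exp (θ * (Real.log x - Real.log y)) := by
    rw [rpow_def_of_pos hx, rpow_def_of_pos hy, ← exp_add]
    nth_rw 2 [← exp_log hy]
    rw [← exp_add]
    ring_nf
  simp only [hexp, intervalIntegral.integral_const_mul]
  rw [intervalIntegral.integral_comp_mul_right _ hlog, integral_exp, zero_mul, one_mul, exp_zero,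
    exp_sub, exp_log hx, exp_log hy, logMean, smul_eq_mul]
  field_simp

theorem setIntegral_sinBetaWeight_div_interpolation (hx : 0 < x) (hy : 0 < y) (hxy : x ≠ y) :
    (x - y) ^ 2 * ∫ z in Ioc (0 : ℝ) 1 ×ˢ Ioc (0 : ℝ) 1,
        sinBetaWeight z / (x * z.2 + y * (1 - z.2)) =
      π * ((x + y) / 2 - logMean x y) := by
  have hgap : EqOn
      (fun θ => (x - y) ^ 2 * (Real.sin (θ * π) *
        ∫ u in (0 : ℝ)..1, (1 - u) ^ θ * u ^ (1 - θ) * (x * u + y * (1 - u))⁻¹))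
      (fun θ => π * (θ * x + (1 - θ) * y - x ^ θ * y ^ (1 - θ))) (Ioo 0 1) :=
    fun θ hθ => (weighted_arith_mean_sub_geom_mean_eq_integral hx hy hθ).symm
  have harith : ∫ θ in (0 : ℝ)..1, (θ * x + (1 - θ) * y) = (x + y) / 2 := by
    have haffine (θ : ℝ) : θ * x + (1 - θ) * y = θ * (x - y) + y := by ring
    simp only [haffine]
    rw [intervalIntegral.integral_add (Continuous.intervalIntegrable (by fun_prop) _ _)
      intervalIntegrable_const, intervalIntegral.integral_mul_const, integral_id,
      intervalIntegral.integral_const, smul_eq_mul]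
    ring
  simp only [div_eq_mul_inv (sinBetaWeight _)]
  rw [setIntegral_sinBetaWeight_mul (g := fun u => (x * u + y * (1 - u))⁻¹)
      (ContinuousOn.inv₀ (by fun_prop) fun u hu => (interpolation_pos hx hy hu).ne'),
    ← intervalIntegral.integral_const_mul,
    intervalIntegral.integral_congr_Ioo_of_le zero_le_one hgap,
    intervalIntegral.integral_const_mul,
    intervalIntegral.integral_sub (Continuous.intervalIntegrable (by fun_prop) _ _)
      ((continuous_rpow_mul_rpow_one_sub hx.ne' hy.ne').intervalIntegrable _ _),
    harith, integral_rpow_mul_rpow_one_sub hx hy hxy]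

theorem min_le_interpolation {u : ℝ} (hu : u ∈ Icc 0 1) : min x y ≤ x * u + y * (1 - u) := by
  nlinarith [mul_le_mul_of_nonneg_right (min_le_left x y) hu.1,
    mul_le_mul_of_nonneg_right (min_le_right x y) (sub_nonneg.2 hu.2)]

theorem ae_min_le_interpolation (x y : ℝ) :
    ∀ᵐ z : ℝ × ℝ ∂volume.restrict (Ioc (0 : ℝ) 1 ×ˢ Ioc (0 : ℝ) 1),
      min x y ≤ x * z.2 + y * (1 - z.2) := by
  filter_upwards [ae_restrict_mem (measurableSet_Ioc.prod measurableSet_Ioc)] with z hz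
  exact min_le_interpolation (Ioc_subset_Icc_self hz.2)

theorem integrableOn_paperP_div_mul_exp (hx : 0 < x) (hy : 0 < y) :
    IntegrableOn (fun s => paperP x y s / s * Real.exp (-s * y)) (Ioi 0) := by
  have hint := (integrable_mul_exp_neg_mul_prod integrableOn_sinBetaWeight (by fun_prop)
    (lt_min hx hy) (ae_min_le_interpolation x y)).integral_prod_left
  exact IntegrableOn.congr_fun (hint.const_mul (x - y))
    (fun s hs => (paperP_div_mul_exp (ne_of_gt hs) x y).symm) measurableSet_Ioi

theorem logMean_eq_arith_mean_sub_integral (hx : 0 < x) (hy : 0 < y) (hxy : x ≠ y) :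
    logMean x y = (x + y) / 2 -
      (x - y) / π * ∫ s in Ioi (0 : ℝ), paperP x y s / s * Real.exp (-s * y) := by
  have hdouble : ∫ s in Ioi (0 : ℝ), paperP x y s / s * Real.exp (-s * y) =
      (x - y) * ∫ z in Ioc (0 : ℝ) 1 ×ˢ Ioc (0 : ℝ) 1,
        sinBetaWeight z / (x * z.2 + y * (1 - z.2)) := by
    rw [setIntegral_congr_fun measurableSet_Ioi
        fun s hs => paperP_div_mul_exp (ne_of_gt hs) x y, integral_const_mul,
      integral_mul_exp_neg_mul_eq_integral_div integrableOn_sinBetaWeight (by fun_prop)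
        (lt_min hx hy) (ae_min_le_interpolation x y)]
  have hgap := setIntegral_sinBetaWeight_div_interpolation hx hy hxy
  rw [hdouble, div_mul_eq_mul_div, ← mul_assoc, ← sq, hgap, mul_div_cancel_left₀ _ pi_ne_zero,
    sub_sub_cancel]

end LogMean

theorem paperP_add_right (x y t s : ℝ) : paperP (x + t) (y + t) s = paperP x y s := by
  rw [paperP, paperP, add_sub_add_right_eq_sub]

theorem logarithmic_mean_integral_representation_general
    (x y : ℝ) (hx : 0 < x) (hy : 0 < y) (hxy : x ≠ y) (t : ℝ) (ht : -min x y < t) :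
    logMean (x + t) (y + t) =
      logMean x y + t +
        (x - y) / π *
          ∫ s in Ioi (0 : ℝ),
            paperP x y s / s * Real.exp (-s * y) * (1 - Real.exp (-s * t)) := by
  have hxt : 0 < x + t := by linarith [min_le_left x y]
  have hyt : 0 < y + t := by linarith [min_le_right x y]
  have hsplit (s : ℝ) :
      paperP x y s / s * Real.exp (-s * y) * (1 - Real.exp (-s * t)) =
        paperP x y s / s * Real.exp (-s * y) -
          paperP (x + t) (y + t) s / s * Real.exp (-s * (y + t)) := by
    rw [paperP_add_right, mul_add, exp_add]
    ring
  simp only [hsplit]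
  rw [integral_sub (integrableOn_paperP_div_mul_exp hx hy)
      (integrableOn_paperP_div_mul_exp hxt hyt),
    logMean_eq_arith_mean_sub_integral hxt hyt (by simpa using hxy),
    logMean_eq_arith_mean_sub_integral hx hy hxy, add_sub_add_right_eq_sub]
  ring

theorem logarithmic_mean_integral_representation
    (x y : ℝ) (hxy : x > y) (hy : 0 < y) (t : ℝ) (ht : -y < t) :
    (x - y) / (Real.log (x + t) - Real.log (y + t)) =
      (x - y) / (Real.log x - Real.log y) + t +
        (x - y) / π *
          ∫ s in Set.Ioi (0 : ℝ),
            paperP x y s / s * Real.exp (-s * y) * (1 - Real.exp (-s * t)) := by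
  simpa only [logMean, add_sub_add_right_eq_sub] using
    logarithmic_mean_integral_representation_general x y (hy.trans hxy) hy hxy.ne' t
      (by rwa [min_eq_right hxy.le])
end
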